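/- arXiv:1702.00547 — 10 statements merged into one kernel-verified Lean document; each statement's English description precedes it below -/
import Mathlib

section
/- Let m, p1, p2, q, n1, n2 be positive natural numbers and let A1 ∈ ℍ^{m×p1}, A2 ∈ ℍ^{m×p2}, B1 ∈ ℍ^{q×n1}, B2 ∈ ℍ^{q×n2}, C1 ∈ ℍ^{m×n1}, C2 ∈ ℍ^{m×n2} be quaternion matrices. Define D1 = R_{B1} B2, A = R_{A2} A1, B = B2 L_{D1}, and C = R_{A2} (R_{A1} C1 B1⁺ B2 − C2) L_{D1}. Then there exist quaternion matrices X ∈ ℍ^{p1×n1}, Y ∈ ℍ^{m×q}, Z ∈ ℍ^{p2×n2} satisfying A1 X − Y B1 = C1 and A2 Z − Y B2 = C2 if and only if R_{A1} C1 L_{B1} = 0, R_A C = 0, and C L_B = 0. -/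
open Matrix

noncomputable section

/-- `Mat a b` is the type of `a × b` matrices over the real quaternions. -/
abbrev Mat (a b : ℕ) := Matrix (Fin a) (Fin b) (Quaternion ℝ)

/-- `Ad` is a Moore–Penrose inverse of `A`: the four Penrose equations hold. -/
def IsMPInv {k l : Type*} [Fintype k] [Fintype l]
    (A : Matrix k l (Quaternion ℝ)) (Ad : Matrix l k (Quaternion ℝ)) : Prop :=
  A * Ad * A = A ∧ Ad * A * Ad = Ad ∧ (A * Ad)ᴴ = A * Ad ∧ (Ad * A)ᴴ = Ad * A

/-- The projector `L_A = I - A⁺ A`. -/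
def Lp {k l : Type*} [Fintype k] [Fintype l] [DecidableEq l]
    (A : Matrix k l (Quaternion ℝ)) (Ad : Matrix l k (Quaternion ℝ)) :
    Matrix l l (Quaternion ℝ) :=
  1 - Ad * A

/-- The projector `R_A = I - A A⁺`. -/
def Rp {k l : Type*} [Fintype k] [Fintype l] [DecidableEq k]
    (A : Matrix k l (Quaternion ℝ)) (Ad : Matrix l k (Quaternion ℝ)) :
    Matrix k k (Quaternion ℝ) :=
  1 - A * Ad

theorem stmt_0 {m p1 p2 q n1 n2 : ℕ}
    (hm : 0 < m) (hp1 : 0 < p1) (hp2 : 0 < p2) (hq : 0 < q) (hn1 : 0 < n1) (hn2 : 0 < n2)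
    (A1 : Mat m p1) (A1d : Mat p1 m) (hA1 : IsMPInv A1 A1d)
    (A2 : Mat m p2) (A2d : Mat p2 m) (hA2 : IsMPInv A2 A2d)
    (B1 : Mat q n1) (B1d : Mat n1 q) (hB1 : IsMPInv B1 B1d)
    (B2 : Mat q n2) (C1 : Mat m n1) (C2 : Mat m n2)
    (D1 : Mat q n2) (hD1 : D1 = Rp B1 B1d * B2)
    (D1d : Mat n2 q) (hD1d : IsMPInv D1 D1d)
    (A : Mat m p1) (hA : A = Rp A2 A2d * A1)
    (Ad : Mat p1 m) (hAd : IsMPInv A Ad)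
    (B : Mat q n2) (hB : B = B2 * Lp D1 D1d)
    (Bd : Mat n2 q) (hBd : IsMPInv B Bd)
    (C : Mat m n2)
    (hC : C = Rp A2 A2d * (Rp A1 A1d * C1 * B1d * B2 - C2) * Lp D1 D1d) :
    (∃ (X : Mat p1 n1) (Y : Mat m q) (Z : Mat p2 n2),
        A1 * X - Y * B1 = C1 ∧ A2 * Z - Y * B2 = C2) ↔
      (Rp A1 A1d * C1 * Lp B1 B1d = 0 ∧ Rp A Ad * C = 0 ∧ C * Lp B Bd = 0) := by
  obtain ⟨a1, -, -, -⟩ := hA1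
  obtain ⟨a2, -, -, -⟩ := hA2
  obtain ⟨b1, -, -, -⟩ := hB1
  obtain ⟨d1, -, -, -⟩ := hD1d
  obtain ⟨ha, -, -, -⟩ := hAd
  obtain ⟨hb, -, -, -⟩ := hBd
  have r1 : Rp A1 A1d * A1 = 0 := by rw [Rp, Matrix.sub_mul, Matrix.one_mul, a1, sub_self]
  have r2 : Rp A2 A2d * A2 = 0 := by rw [Rp, Matrix.sub_mul, Matrix.one_mul, a2, sub_self]
  have ra : Rp A Ad * A = 0 := by rw [Rp, Matrix.sub_mul, Matrix.one_mul, ha, sub_self]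
  have rb1 : Rp B1 B1d * B1 = 0 := by rw [Rp, Matrix.sub_mul, Matrix.one_mul, b1, sub_self]
  have lb1 : B1 * Lp B1 B1d = 0 := by
    rw [Lp, Matrix.mul_sub, Matrix.mul_one, ← Matrix.mul_assoc, b1, sub_self]
  have lb : B * Lp B Bd = 0 := by
    rw [Lp, Matrix.mul_sub, Matrix.mul_one, ← Matrix.mul_assoc, hb, sub_self]
  have ld : D1 * Lp D1 D1d = 0 := by
    rw [Lp, Matrix.mul_sub, Matrix.mul_one, ← Matrix.mul_assoc, d1, sub_self]
  have r22 : Rp A2 A2d * Rp A2 A2d = Rp A2 A2d := by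
    conv_lhs => rhs; rw [Rp]
    rw [Matrix.mul_sub, Matrix.mul_one, ← Matrix.mul_assoc, r2, Matrix.zero_mul, sub_zero]
  constructor
  · rintro ⟨X, Y, Z, h1, h2⟩
    have e1 : Rp A1 A1d * C1 = - (Rp A1 A1d * Y * B1) := by
      rw [← h1, Matrix.mul_sub, ← Matrix.mul_assoc, r1, Matrix.zero_mul, zero_sub,
        Matrix.mul_assoc]
    have e2 : Rp A2 A2d * C2 = - (Rp A2 A2d * Y * B2) := by
      rw [← h2, Matrix.mul_sub, ← Matrix.mul_assoc, r2, Matrix.zero_mul, zero_sub,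
        Matrix.mul_assoc]
    have e3 : B1 * B1d * B = B := by
      have : D1 * Lp D1 D1d = B - B1 * B1d * B := by
        conv_lhs => lhs; rw [hD1]
        rw [Matrix.mul_assoc, ← hB, Rp, Matrix.sub_mul, Matrix.one_mul]
      rw [ld] at this
      exact (sub_eq_zero.mp this.symm).symm
    have e4 : C = A * (A1d * Y) * B := by
      have t1 : Rp A1 A1d * C1 * B1d * B2 * Lp D1 D1d = - (Rp A1 A1d * Y * B) := by
        rw [e1, Matrix.mul_assoc _ B2, ← hB, Matrix.neg_mul, Matrix.neg_mul,
          Matrix.mul_assoc _ B1 B1d, Matrix.mul_assoc _ (B1 * B1d) B, e3]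
      have t2 : Rp A2 A2d * C2 * Lp D1 D1d = - (Rp A2 A2d * Y * B) := by
        rw [e2, Matrix.neg_mul, Matrix.mul_assoc _ B2, ← hB]
      have t3 : Rp A1 A1d * Y * B = Y * B - A1 * (A1d * Y) * B := by
        rw [Rp, Matrix.sub_mul, Matrix.sub_mul, Matrix.one_mul, Matrix.mul_assoc A1]
      rw [hC, Matrix.mul_sub, Matrix.sub_mul, t2, Matrix.mul_assoc _ _ (Lp D1 D1d), t1, t3, hA]
      simp only [Matrix.mul_sub, Matrix.mul_neg, Matrix.mul_assoc]
      abel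
    refine ⟨?_, ?_, ?_⟩
    · rw [e1, Matrix.neg_mul, Matrix.mul_assoc, lb1, Matrix.mul_zero, neg_zero]
    · rw [e4, ← Matrix.mul_assoc, ← Matrix.mul_assoc, ra, Matrix.zero_mul, Matrix.zero_mul]
    · rw [e4, Matrix.mul_assoc, lb, Matrix.mul_zero]
  · rintro ⟨h1, h2, h3⟩
    have c1 : Rp A1 A1d * C1 * B1d * B1 = Rp A1 A1d * C1 := by
      rw [Lp, Matrix.mul_sub, Matrix.mul_one, sub_eq_zero, ← Matrix.mul_assoc] at h1
      exact h1.symm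
    have c2 : A * Ad * C = C := by
      rw [Rp, Matrix.sub_mul, Matrix.one_mul, sub_eq_zero] at h2
      exact h2.symm
    have c3 : C * Bd * B = C := by
      rw [Lp, Matrix.mul_sub, Matrix.mul_one, sub_eq_zero, ← Matrix.mul_assoc] at h3
      exact h3.symm
    obtain ⟨U, hU⟩ : ∃ U : Mat p1 q, A * U * B = C := by
      refine ⟨Ad * C * Bd, ?_⟩
      rw [← Matrix.mul_assoc, ← Matrix.mul_assoc, c2, c3]
    obtain ⟨E, hE⟩ : ∃ E : Mat m n2,
      E = Rp A2 A2d * (C2 + (A1 * U - Rp A1 A1d * C1 * B1d) * B2) := ⟨_, rfl⟩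
    have hE2 : Rp A2 A2d * E = E := by rw [hE, ← Matrix.mul_assoc, r22]
    have hEL : E * Lp D1 D1d = 0 := by
      have : E * Lp D1 D1d = A * U * B - C := by
        rw [hE, hA, hB, hC]
        simp only [Matrix.mul_sub, Matrix.sub_mul, Matrix.mul_add, Matrix.add_mul,
          Matrix.mul_assoc]
        abel
      rw [this, hU, sub_self]
    have hED : E * D1d * D1 = E := by
      rw [Lp, Matrix.mul_sub, Matrix.mul_one, sub_eq_zero, ← Matrix.mul_assoc] at hEL
      exact hEL.symm
    obtain ⟨Y, hY⟩ : ∃ Y : Mat m q,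
      Y = A1 * U - Rp A1 A1d * C1 * B1d - E * D1d * Rp B1 B1d := ⟨_, rfl⟩
    have y1 : Y * B1 = A1 * U * B1 - (C1 - A1 * A1d * C1) := by
      rw [hY, Matrix.sub_mul, Matrix.sub_mul, c1, Matrix.mul_assoc _ (Rp B1 B1d), rb1,
        Matrix.mul_zero, sub_zero, Rp, Matrix.sub_mul, Matrix.one_mul]
    have y2 : Rp A2 A2d * (C2 + Y * B2) = 0 := by
      have : C2 + Y * B2 = (C2 + (A1 * U - Rp A1 A1d * C1 * B1d) * B2) - E := by
        rw [hY, Matrix.sub_mul _ (E * D1d * Rp B1 B1d), Matrix.mul_assoc _ (Rp B1 B1d), ← hD1, hED]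
        abel
      rw [this, Matrix.mul_sub, ← hE, hE2, sub_self]
    refine ⟨A1d * C1 + U * B1, Y, A2d * (C2 + Y * B2), ?_, ?_⟩
    · rw [y1]
      simp only [Matrix.mul_add, Matrix.mul_assoc]
      abel
    · rw [Rp, Matrix.sub_mul, Matrix.one_mul, sub_eq_zero] at y2
      rw [← Matrix.mul_assoc, ← y2]
      abel
end
end

section
/- Let A1 ∈ ℍ^{m×p1}, A2 ∈ ℍ^{m×p2}, B1 ∈ ℍ^{q×n1}, B2 ∈ ℍ^{q×n2}, C1 ∈ ℍ^{m×n1}, C2 ∈ ℍ^{m×n2} be quaternion matrices, and define D1 = R_{B1} B2, A = R_{A2} A1, B = B2 L_{D1}, C = R_{A2} (R_{A1} C1 B1⁺ B2 − C2) L_{D1}. Assume R_{A1} C1 L_{B1} = 0, R_A C = 0 and C L_B = 0. Then quaternion matrices (X, Y, Z) of sizes p1×n1, m×q, p2×n2 satisfy A1 X − Y B1 = C1 and A2 Z − Y B2 = C2 if and only if there exist quaternion matrices W1, W2, W3, W4, W5, W6 of appropriate sizes such that, setting U1 = A⁺ C B⁺ + L_A W2 + W3 R_B and V1 = −R_{A2}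 (C2 − R_{A1} C1 B1⁺ B2 + A1 U1 B2) D1⁺ + A2 W4 + W5 R_{D1}, one has X = A1⁺ C1 + U1 B1 + L_{A1} W1, Y = −R_{A1} C1 B1⁺ + A1 U1 + V1 R_{B1}, and Z = A2⁺ (C2 − R_{A1} C1 B1⁺ B2 + A1 U1 B2) + W4 D1 + L_{A2} W6. -/
open Matrix

noncomputable section

theorem stmt_1 {m p1 p2 q n1 n2 : ℕ}
    (A1 : Mat m p1) (A1d : Mat p1 m) (hA1 : IsMPInv A1 A1d)
    (A2 : Mat m p2) (A2d : Mat p2 m) (hA2 : IsMPInv A2 A2d)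
    (B1 : Mat q n1) (B1d : Mat n1 q) (hB1 : IsMPInv B1 B1d)
    (B2 : Mat q n2) (C1 : Mat m n1) (C2 : Mat m n2)
    (D1 : Mat q n2) (hD1 : D1 = Rp B1 B1d * B2)
    (D1d : Mat n2 q) (hD1d : IsMPInv D1 D1d)
    (A : Mat m p1) (hA : A = Rp A2 A2d * A1)
    (Ad : Mat p1 m) (hAd : IsMPInv A Ad)
    (B : Mat q n2) (hB : B = B2 * Lp D1 D1d)
    (Bd : Mat n2 q) (hBd : IsMPInv B Bd)
    (C : Mat m n2)
    (hC : C = Rp A2 A2d * (Rp A1 A1d * C1 * B1d * B2 - C2) * Lp D1 D1d)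
    (hcond1 : Rp A1 A1d * C1 * Lp B1 B1d = 0)
    (hcond2 : Rp A Ad * C = 0)
    (hcond3 : C * Lp B Bd = 0)
    (X : Mat p1 n1) (Y : Mat m q) (Z : Mat p2 n2) :
    (A1 * X - Y * B1 = C1 ∧ A2 * Z - Y * B2 = C2) ↔
      (∃ (W1 : Mat p1 n1) (W2 : Mat p1 q) (W3 : Mat p1 q) (W4 : Mat p2 q)
          (W5 : Mat m q) (W6 : Mat p2 n2) (U1 : Mat p1 q) (V1 : Mat m q),
        U1 = Ad * C * Bd + Lp A Ad * W2 + W3 * Rp B Bd ∧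
        V1 = -(Rp A2 A2d * (C2 - Rp A1 A1d * C1 * B1d * B2 + A1 * U1 * B2) * D1d)
              + A2 * W4 + W5 * Rp D1 D1d ∧
        X = A1d * C1 + U1 * B1 + Lp A1 A1d * W1 ∧
        Y = -(Rp A1 A1d * C1 * B1d) + A1 * U1 + V1 * Rp B1 B1d ∧
        Z = A2d * (C2 - Rp A1 A1d * C1 * B1d * B2 + A1 * U1 * B2)
              + W4 * D1 + Lp A2 A2d * W6) := by
  obtain ⟨a1, a1', -, -⟩ := hA1
  obtain ⟨a2, a2', -, -⟩ := hA2
  obtain ⟨b1, b1', -, -⟩ := hB1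
  obtain ⟨d1, d1', -, -⟩ := hD1d
  obtain ⟨ea, ea', -, -⟩ := hAd
  obtain ⟨eb, eb', -, -⟩ := hBd
  have hAAC : A * Ad * C = C := by
    have h := hcond2
    rw [Rp, Matrix.sub_mul, Matrix.one_mul, sub_eq_zero] at h
    exact h.symm
  have hCBB : C * (Bd * B) = C := by
    have h := hcond3
    rw [Lp, Matrix.mul_sub, Matrix.mul_one, sub_eq_zero] at h
    exact h.symm
  have hRB : Rp B1 B1d * B1 = 0 := by
    rw [Rp, Matrix.sub_mul, Matrix.one_mul, b1, sub_self]
  have hRD : Rp D1 D1d * D1 = 0 := by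
    rw [Rp, Matrix.sub_mul, Matrix.one_mul, d1, sub_self]
  have hLA1 : A1 * Lp A1 A1d = 0 := by
    rw [Lp, Matrix.mul_sub, Matrix.mul_one, ← Matrix.mul_assoc, a1, sub_self]
  have hLA2 : A2 * Lp A2 A2d = 0 := by
    rw [Lp, Matrix.mul_sub, Matrix.mul_one, ← Matrix.mul_assoc, a2, sub_self]
  have hLA : A * Lp A Ad = 0 := by
    rw [Lp, Matrix.mul_sub, Matrix.mul_one, ← Matrix.mul_assoc, ea, sub_self]
  have hRBB : Rp B Bd * B = 0 := by
    rw [Rp, Matrix.sub_mul, Matrix.one_mul, eb, sub_self]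
  have hRA2 : Rp A2 A2d * A2 = 0 := by
    rw [Rp, Matrix.sub_mul, Matrix.one_mul, a2, sub_self]
  have hDL : D1 * Lp D1 D1d = 0 := by
    rw [Lp, Matrix.mul_sub, Matrix.mul_one, ← Matrix.mul_assoc, d1, sub_self]
  obtain ⟨P, hP⟩ : ∃ P, P = Rp A1 A1d * C1 * B1d := ⟨_, rfl⟩
  have hPB : P * B1 = C1 - A1 * (A1d * C1) := by
    have h := hcond1
    rw [Lp, Matrix.mul_sub, Matrix.mul_one, sub_eq_zero, ← Matrix.mul_assoc] at h
    rw [hP, ← h, Rp, Matrix.sub_mul, Matrix.one_mul, Matrix.mul_assoc]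
  rw [← hP] at hC ⊢
  have key : ∀ U : Mat p1 q, Rp A2 A2d * (C2 - P * B2 + A1 * U * B2) * Lp D1 D1d
      = A * U * B - C := by
    intro U
    rw [hA, hB, hC]
    simp only [Matrix.mul_add, Matrix.add_mul, Matrix.mul_sub, Matrix.sub_mul, Matrix.mul_assoc]
    abel
  constructor
  · rintro ⟨h1, h2⟩
    obtain ⟨U, hU⟩ : ∃ U, U = (X - A1d * C1) * B1d := ⟨_, rfl⟩
    have hYP : (Y + P) * B1 = A1 * (X - A1d * C1) := by
      rw [Matrix.add_mul, hPB, Matrix.mul_sub, ← h1]; abel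
    have hAUB : A1 * U * B1 = (Y + P) * B1 := by
      rw [hU, ← Matrix.mul_assoc, ← hYP, Matrix.mul_assoc, Matrix.mul_assoc,
        ← Matrix.mul_assoc B1, b1]
    obtain ⟨T, hT⟩ : ∃ T, T = Y + P - A1 * U := ⟨_, rfl⟩
    have hTB : T * B1 = 0 := by rw [hT, Matrix.sub_mul, hAUB, sub_self]
    have hTR : T * Rp B1 B1d = T := by
      rw [Rp, Matrix.mul_sub, Matrix.mul_one, ← Matrix.mul_assoc, hTB, Matrix.zero_mul, sub_zero]
    obtain ⟨F, hF⟩ : ∃ F, F = C2 - P * B2 + A1 * U * B2 := ⟨_, rfl⟩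
    have hTD : T * D1 = A2 * Z - F := by
      rw [hD1, ← Matrix.mul_assoc, hTR, hT, hF, ← h2]
      simp only [Matrix.add_mul, Matrix.sub_mul]
      abel
    have hRTD : Rp A2 A2d * F = - (Rp A2 A2d * (T * D1)) := by
      rw [hTD, Matrix.mul_sub, ← Matrix.mul_assoc, hRA2, Matrix.zero_mul]; abel
    have hAUBC : A * U * B = C := by
      rw [← sub_eq_zero, ← key U, ← hF, hRTD, Matrix.neg_mul, Matrix.mul_assoc, Matrix.mul_assoc,
        hDL, Matrix.mul_zero, Matrix.mul_zero, neg_zero]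
    refine ⟨X - U * B1, U, Ad * (A * U), A2d * (T * D1) * D1d, T, Z, U, T, ?_, ?_, ?_, ?_, ?_⟩
    · rw [← hAUBC, Lp, Rp]
      simp only [Matrix.mul_sub, Matrix.sub_mul, Matrix.mul_one, Matrix.one_mul, Matrix.mul_assoc]
      abel
    · rw [← hF, hRTD, Rp, Rp]
      simp only [Matrix.mul_sub, Matrix.sub_mul, Matrix.mul_one, Matrix.one_mul, Matrix.mul_assoc,
        Matrix.neg_mul]
      abel
    · have h : A1d * (A1 * (X - U * B1)) = A1d * C1 := by
        rw [Matrix.mul_sub, ← Matrix.mul_assoc A1 U, hAUB, hYP, ← Matrix.mul_sub, sub_sub_cancel,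
          ← Matrix.mul_assoc A1, ← Matrix.mul_assoc A1d, ← Matrix.mul_assoc A1d, a1']
      rw [Lp, Matrix.sub_mul, Matrix.one_mul, Matrix.mul_assoc A1d A1, h]
      abel
    · rw [hTR, hT]; abel
    · have h : A2d * (T * D1) * D1d * D1 = A2d * (T * D1) := by
        simp only [Matrix.mul_assoc]
        rw [← Matrix.mul_assoc D1, d1]
      rw [← hF, h, hTD, Lp, Matrix.mul_sub, Matrix.sub_mul, Matrix.one_mul, Matrix.mul_assoc]
      abel
  · rintro ⟨W1, W2, W3, W4, W5, W6, U, V, hU, hV, hX, hY, hZ⟩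
    have hAUBC : A * U * B = C := by
      rw [hU, Matrix.mul_add, Matrix.mul_add, Matrix.add_mul, Matrix.add_mul,
        ← Matrix.mul_assoc A (Lp A Ad), hLA, Matrix.mul_assoc A (W3 * _), Matrix.mul_assoc W3, hRBB,
        ← Matrix.mul_assoc A, ← Matrix.mul_assoc A, hAAC, Matrix.mul_assoc C, hCBB]
      simp
    have hk := key U
    obtain ⟨F, hF⟩ : ∃ F, F = C2 - P * B2 + A1 * U * B2 := ⟨_, rfl⟩
    rw [← hF] at hk hV hZ
    rw [hAUBC, sub_self, Lp, Matrix.mul_sub, Matrix.mul_one, sub_eq_zero] at hk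
    constructor
    · rw [hX, hY]
      simp only [Matrix.mul_add, Matrix.add_mul, Matrix.neg_mul]
      rw [hPB, Matrix.mul_assoc V, hRB, ← Matrix.mul_assoc A1 (Lp A1 A1d), hLA1]
      simp only [Matrix.mul_zero, Matrix.zero_mul, Matrix.mul_assoc]
      abel
    · have hVD : V * D1 = - (Rp A2 A2d * F) + A2 * (W4 * D1) := by
        rw [hV, Matrix.add_mul, Matrix.add_mul, Matrix.mul_assoc W5, hRD, Matrix.neg_mul,
          Matrix.mul_assoc _ D1d, ← hk, Matrix.mul_zero, add_zero, Matrix.mul_assoc A2]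
      have hYB : Y * B2 = -(P * B2) + A1 * U * B2 + V * D1 := by
        rw [hY, hD1]
        simp only [Matrix.add_mul, Matrix.neg_mul, Matrix.mul_assoc]
      have hF' : C2 = F + P * B2 - A1 * U * B2 := by rw [hF]; abel
      rw [hYB, hVD, hZ, hF', Matrix.mul_add, Matrix.mul_add, ← Matrix.mul_assoc A2 (Lp A2 A2d),
        hLA2, Rp, Matrix.sub_mul, Matrix.one_mul, Matrix.zero_mul, Matrix.mul_assoc A2 A2d]
      abel
end
end

section
/- Let A1 ∈ ℍ^{m1×p}, B1 ∈ ℍ^{q1×n}, C1 ∈ ℍ^{m1×n}, A2 ∈ ℍ^{m2×m1}, B2 ∈ ℍ^{q2×q1}, C2 ∈ ℍ^{m2×q1} be quaternion matrices. Define A11 = R_{(A2 A1)} A2, B11 = R_{B1} L_{B2}, and C11 = R_{(A2 A1)} (A2 R_{A1} C1 B1⁺ + C2) L_{B2}. Then there exist quaternion matrices X1 ∈ ℍ^{p×n}, X2 ∈ ℍ^{m1×q1}, X3 ∈ ℍ^{m2×q2} satisfying A1 X1 − X2 B1 = C1 and A2 X2 − X3 B2 = C2 if and only if R_{A1} C1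 L_{B1} = 0, R_{A11} C11 = 0, and C11 L_{B11} = 0. -/
open Matrix

noncomputable section

theorem stmt_2 {m1 p q1 n m2 q2 : ℕ}
    (A1 : Mat m1 p) (A1d : Mat p m1) (hA1 : IsMPInv A1 A1d)
    (B1 : Mat q1 n) (B1d : Mat n q1) (hB1 : IsMPInv B1 B1d)
    (C1 : Mat m1 n)
    (A2 : Mat m2 m1)
    (B2 : Mat q2 q1) (B2d : Mat q1 q2) (hB2 : IsMPInv B2 B2d)
    (C2 : Mat m2 q1)
    (A21 : Mat m2 p) (hA21 : A21 = A2 * A1)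
    (A21d : Mat p m2) (hA21d : IsMPInv A21 A21d)
    (A11 : Mat m2 m1) (hA11 : A11 = Rp A21 A21d * A2)
    (A11d : Mat m1 m2) (hA11d : IsMPInv A11 A11d)
    (B11 : Mat q1 q1) (hB11 : B11 = Rp B1 B1d * Lp B2 B2d)
    (B11d : Mat q1 q1) (hB11d : IsMPInv B11 B11d)
    (C11 : Mat m2 q1)
    (hC11 : C11 = Rp A21 A21d * (A2 * Rp A1 A1d * C1 * B1d + C2) * Lp B2 B2d) :
    (∃ (X1 : Mat p n) (X2 : Mat m1 q1) (X3 : Mat m2 q2),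
        A1 * X1 - X2 * B1 = C1 ∧ A2 * X2 - X3 * B2 = C2) ↔
      (Rp A1 A1d * C1 * Lp B1 B1d = 0 ∧ Rp A11 A11d * C11 = 0 ∧
        C11 * Lp B11 B11d = 0) := by
  obtain ⟨a1, -, -, -⟩ := hA1
  obtain ⟨b1, -, -, -⟩ := hB1
  obtain ⟨b2, -, -, -⟩ := hB2
  obtain ⟨a21, -, -, -⟩ := hA21d
  obtain ⟨a11, -, -, -⟩ := hA11d
  obtain ⟨b11, -, -, -⟩ := hB11d
  have rA1 : Rp A1 A1d * A1 = 0 := by rw [Rp, Matrix.sub_mul, a1, Matrix.one_mul, sub_self]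
  have rB1 : Rp B1 B1d * B1 = 0 := by rw [Rp, Matrix.sub_mul, b1, Matrix.one_mul, sub_self]
  have rA11 : Rp A11 A11d * A11 = 0 := by rw [Rp, Matrix.sub_mul, a11, Matrix.one_mul, sub_self]
  have rA21 : Rp A21 A21d * A21 = 0 := by rw [Rp, Matrix.sub_mul, a21, Matrix.one_mul, sub_self]
  have lB1 : B1 * Lp B1 B1d = 0 := by
    rw [Lp, Matrix.mul_sub, ← Matrix.mul_assoc, b1, Matrix.mul_one, sub_self]
  have lB2 : B2 * Lp B2 B2d = 0 := by
    rw [Lp, Matrix.mul_sub, ← Matrix.mul_assoc, b2, Matrix.mul_one, sub_self]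
  have lB11 : B11 * Lp B11 B11d = 0 := by
    rw [Lp, Matrix.mul_sub, ← Matrix.mul_assoc, b11, Matrix.mul_one, sub_self]
  have eA1 : A1 * A1d = 1 - Rp A1 A1d := by simp [Rp]
  have eB1 : B1 * B1d = 1 - Rp B1 B1d := by simp [Rp]
  have eA21 : A21 * A21d = 1 - Rp A21 A21d := by simp [Rp]
  have eA11 : A11 * A11d = 1 - Rp A11 A11d := by simp [Rp]
  have eB1' : B1d * B1 = 1 - Lp B1 B1d := by simp [Lp]
  have eB2' : B2d * B2 = 1 - Lp B2 B2d := by simp [Lp]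
  have eB11' : B11d * B11 = 1 - Lp B11 B11d := by simp [Lp]
  have hPA : Rp A21 A21d * A2 * A1 = 0 := by rw [Matrix.mul_assoc, ← hA21, rA21]
  constructor
  · rintro ⟨X1, X2, X3, h1, h2⟩
    have key : C11 = A11 * X2 * B11 := by
      have e1 : Rp A21 A21d * A2 * Rp A1 A1d = Rp A21 A21d * A2 := by
        rw [Rp.eq_1 A1, Matrix.mul_sub, ← Matrix.mul_assoc, hPA]; simp
      have e2 : Rp A21 A21d * A2 * C1 * B1d
          = - (Rp A21 A21d * A2 * X2 * (1 - Rp B1 B1d)) := by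
        rw [← h1, Matrix.mul_sub, ← Matrix.mul_assoc, hPA, ← eB1]
        simp [Matrix.mul_assoc]
      have e3 : Rp A21 A21d * C2 * Lp B2 B2d = Rp A21 A21d * A2 * X2 * Lp B2 B2d := by
        rw [← h2, Matrix.mul_sub, Matrix.sub_mul, Matrix.mul_assoc _ (X3 * B2),
          Matrix.mul_assoc X3, lB2]
        simp [Matrix.mul_assoc]
      rw [hC11, Matrix.mul_add, Matrix.add_mul, e3, ← Matrix.mul_assoc, ← Matrix.mul_assoc,
        ← Matrix.mul_assoc, e1, e2, hA11, hB11, ← Matrix.mul_assoc, Matrix.mul_sub,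
        Matrix.neg_mul, Matrix.sub_mul, Matrix.mul_one]
      abel
    refine ⟨?_, ?_, ?_⟩
    · rw [← h1, Matrix.mul_sub, ← Matrix.mul_assoc, rA1, Matrix.sub_mul, Matrix.mul_assoc _ (X2 * B1),
        Matrix.mul_assoc X2, lB1]
      simp
    · rw [key, ← Matrix.mul_assoc, ← Matrix.mul_assoc, rA11]; simp
    · rw [key, Matrix.mul_assoc, lB11]; simp
  · rintro ⟨h1, h2, h3⟩
    obtain ⟨V, hV⟩ : ∃ V : Mat m1 q1, A11 * V * B11 = C11 := by
      refine ⟨A11d * C11 * B11d, ?_⟩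
      rw [← Matrix.mul_assoc, ← Matrix.mul_assoc, eA11, Matrix.sub_mul, h2, sub_zero,
        Matrix.one_mul, Matrix.mul_assoc, eB11', Matrix.mul_sub, h3]
      simp
    obtain ⟨D, hD⟩ : ∃ D : Mat m2 q1, D = A2 * Rp A1 A1d * C1 * B1d + C2 - A2 * V * Rp B1 B1d := ⟨_, rfl⟩
    have hPD : Rp A21 A21d * D * Lp B2 B2d = 0 := by
      rw [hD, Matrix.mul_sub, Matrix.sub_mul, ← hC11, ← hV, hA11, hB11]
      simp [Matrix.mul_assoc]
    refine ⟨A1d * C1 + A21d * D * B1,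
      A1 * (A21d * D) + V * Rp B1 B1d - Rp A1 A1d * C1 * B1d, -(Rp A21 A21d * D * B2d), ?_, ?_⟩
    · rw [Matrix.mul_add, Matrix.sub_mul, Matrix.add_mul, Matrix.mul_assoc V, rB1,
        ← Matrix.mul_assoc A1 A1d, eA1, Matrix.mul_assoc _ B1d, eB1', Matrix.mul_sub, h1,
        Matrix.sub_mul, Matrix.mul_assoc A1]
      simp
      abel
    · rw [Matrix.neg_mul, Matrix.mul_assoc _ B2d, eB2', Matrix.mul_sub, Matrix.mul_sub (_ * D), hPD,
        Matrix.mul_add, ← Matrix.mul_assoc A2 A1, ← hA21, ← Matrix.mul_assoc A21, eA21,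
        Matrix.sub_mul]
      simp only [Matrix.mul_one, Matrix.one_mul, sub_zero]
      have : C2 = D - A2 * Rp A1 A1d * C1 * B1d + A2 * V * Rp B1 B1d := by rw [hD]; abel
      rw [this]
      simp only [Matrix.mul_assoc]
      abel
end
end

section
/- Let A1 ∈ ℍ^{m1×p}, B1 ∈ ℍ^{q1×n}, C1 ∈ ℍ^{m1×n}, A2 ∈ ℍ^{m2×m1}, B2 ∈ ℍ^{q2×q1}, C2 ∈ ℍ^{m2×q1} be quaternion matrices, and define A11 = R_{(A2 A1)} A2, B11 = R_{B1} L_{B2}, C11 = R_{(A2 A1)} (A2 R_{A1} C1 B1⁺ + C2) L_{B2}. Assume R_{A1} C1 L_{B1} = 0, R_{A11} C11 = 0 and C11 L_{B11} = 0. Then quaternion matrices (X1, X2, X3) of sizes p×n, m1×q1, m2×q2 satisfy A1 X1 − X2 B1 = C1 and A2 X2 − X3 B2 = C2 if and only if there exist quaternion matrices W1, W2, W3, W4, W5, W6 of appropriate sizes such that, setting V1 = A11⁺ C11 B11⁺ + L_{A11} W2 + W3 R_{B11} and U1 = (A2 A1)⁺ (C2 + A2 R_{A1} C1 B1⁺ −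 A2 V1 R_{B1}) + W4 B2 + L_{(A2 A1)} W6, one has X1 = A1⁺ C1 + U1 B1 + L_{A1} W1, X2 = −R_{A1} C1 B1⁺ + A1 U1 + V1 R_{B1}, and X3 = −R_{(A2 A1)} (C2 + A2 R_{A1} C1 B1⁺ − A2 V1 R_{B1}) B2⁺ + A2 A1 W4 + W5 R_{B2}. -/
open Matrix

noncomputable section

theorem aux_gen {a b c d : ℕ} (A : Mat a b) (Ad : Mat b a) (hA : IsMPInv A Ad)
    (B : Mat c d) (Bd : Mat d c) (hB : IsMPInv B Bd) (C : Mat a d) (X : Mat b d) (Y : Mat a c)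
    (h : A * X - Y * B = C) :
    X = Ad * C + ((X - Ad * C) * Bd) * B + Lp A Ad * ((X - Ad * C) * Lp B Bd) ∧
    Y = -(Rp A Ad * C * Bd) + A * ((X - Ad * C) * Bd) + Y * Rp B Bd := by
  have hA1 := hA.1
  have hB1 := hB.1
  have hB0 : B * Lp B Bd = 0 := by
    simp only [Lp, Matrix.mul_sub, Matrix.mul_one, ← Matrix.mul_assoc, hB1, sub_self]
  have hA0 : Rp A Ad * A = 0 := by
    simp only [Rp, Matrix.sub_mul, Matrix.one_mul, hA1, sub_self]
  have key : A * ((X - Ad * C) * Lp B Bd) = 0 := by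
    have e : A * (X - Ad * C) = Y * B + Rp A Ad * (A * X) - Rp A Ad * (Y * B) := by
      rw [← h]; simp only [Rp, Matrix.mul_sub, Matrix.sub_mul, Matrix.one_mul, Matrix.mul_assoc]
      abel
    rw [← Matrix.mul_assoc, e, ← Matrix.mul_assoc (Rp A Ad) A, hA0]
    simp only [Matrix.sub_mul, Matrix.mul_assoc, hB0, Matrix.mul_zero,
      Matrix.zero_mul, add_zero, sub_zero]
  constructor
  · have : Lp A Ad * ((X - Ad * C) * Lp B Bd) = (X - Ad * C) * Lp B Bd := by
      conv_lhs => rw [Lp, Matrix.sub_mul, Matrix.mul_assoc Ad A, key]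
      simp
    rw [this]
    simp only [Lp, Matrix.mul_sub, Matrix.mul_one, Matrix.mul_assoc]
    abel
  · have hY : Y * B = A * X - C := by rw [← h]; abel
    have : Y * Rp B Bd = Y - (A * X - C) * Bd := by
      rw [← hY]; simp only [Rp, Matrix.mul_sub, Matrix.mul_one, Matrix.mul_assoc]
    rw [this]
    simp only [Rp, Matrix.mul_sub, Matrix.sub_mul, Matrix.one_mul, Matrix.mul_assoc]
    abel

theorem aux_conv {a b c d : ℕ} (A : Mat a b) (Ad : Mat b a) (hA : IsMPInv A Ad)
    (B : Mat c d) (Bd : Mat d c) (hB : IsMPInv B Bd) (C : Mat a d)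
    (h : Rp A Ad * C * Lp B Bd = 0) (U : Mat b c) (V : Mat a c) (W : Mat b d) :
    A * (Ad * C + U * B + Lp A Ad * W) -
      (-(Rp A Ad * C * Bd) + A * U + V * Rp B Bd) * B = C := by
  have hA0 : A * Lp A Ad = 0 := by
    simp only [Lp, Matrix.mul_sub, Matrix.mul_one, ← Matrix.mul_assoc, hA.1, sub_self]
  have hB0 : Rp B Bd * B = 0 := by
    simp only [Rp, Matrix.sub_mul, Matrix.one_mul, hB.1, sub_self]
  have h2 : Rp A Ad * C * Bd * B = Rp A Ad * C := by
    rw [Lp, Matrix.mul_sub, Matrix.mul_one, ← Matrix.mul_assoc, sub_eq_zero] at h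
    exact h.symm
  simp only [Matrix.mul_add, Matrix.add_mul, Matrix.neg_mul, h2]
  rw [← Matrix.mul_assoc A (Lp A Ad), hA0, Matrix.mul_assoc V, hB0]
  simp only [Rp, Matrix.sub_mul, Matrix.one_mul, Matrix.mul_assoc, Matrix.zero_mul,
    Matrix.mul_zero]
  abel

theorem stmt_3 {m1 p q1 n m2 q2 : ℕ}
    (A1 : Mat m1 p) (A1d : Mat p m1) (hA1 : IsMPInv A1 A1d)
    (B1 : Mat q1 n) (B1d : Mat n q1) (hB1 : IsMPInv B1 B1d)
    (C1 : Mat m1 n)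
    (A2 : Mat m2 m1)
    (B2 : Mat q2 q1) (B2d : Mat q1 q2) (hB2 : IsMPInv B2 B2d)
    (C2 : Mat m2 q1)
    (A21 : Mat m2 p) (hA21 : A21 = A2 * A1)
    (A21d : Mat p m2) (hA21d : IsMPInv A21 A21d)
    (A11 : Mat m2 m1) (hA11 : A11 = Rp A21 A21d * A2)
    (A11d : Mat m1 m2) (hA11d : IsMPInv A11 A11d)
    (B11 : Mat q1 q1) (hB11 : B11 = Rp B1 B1d * Lp B2 B2d)
    (B11d : Mat q1 q1) (hB11d : IsMPInv B11 B11d)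
    (C11 : Mat m2 q1)
    (hC11 : C11 = Rp A21 A21d * (A2 * Rp A1 A1d * C1 * B1d + C2) * Lp B2 B2d)
    (hcond1 : Rp A1 A1d * C1 * Lp B1 B1d = 0)
    (hcond2 : Rp A11 A11d * C11 = 0)
    (hcond3 : C11 * Lp B11 B11d = 0)
    (X1 : Mat p n) (X2 : Mat m1 q1) (X3 : Mat m2 q2) :
    (A1 * X1 - X2 * B1 = C1 ∧ A2 * X2 - X3 * B2 = C2) ↔
      (∃ (W1 : Mat p n) (W2 : Mat m1 q1) (W3 : Mat m1 q1) (W4 : Mat p q2)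
          (W5 : Mat m2 q2) (W6 : Mat p q1) (V1 : Mat m1 q1) (U1 : Mat p q1),
        V1 = A11d * C11 * B11d + Lp A11 A11d * W2 + W3 * Rp B11 B11d ∧
        U1 = A21d * (C2 + A2 * Rp A1 A1d * C1 * B1d - A2 * V1 * Rp B1 B1d)
              + W4 * B2 + Lp A21 A21d * W6 ∧
        X1 = A1d * C1 + U1 * B1 + Lp A1 A1d * W1 ∧
        X2 = -(Rp A1 A1d * C1 * B1d) + A1 * U1 + V1 * Rp B1 B1d ∧
        X3 = -(Rp A21 A21d * (C2 + A2 * Rp A1 A1d * C1 * B1d - A2 * V1 * Rp B1 B1d) * B2d)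
              + A2 * A1 * W4 + W5 * Rp B2 B2d) := by
  have hE : ∀ V : Mat m1 q1, Rp A21 A21d *
      (C2 + A2 * Rp A1 A1d * C1 * B1d - A2 * V * Rp B1 B1d) * Lp B2 B2d
        = C11 - A11 * V * B11 := by
    intro V
    rw [hC11, hA11, hB11]
    simp only [Matrix.mul_add, Matrix.add_mul, Matrix.mul_sub, Matrix.sub_mul, Matrix.mul_assoc]
    abel
  constructor
  · rintro ⟨h1, h2⟩
    obtain ⟨g1, g2⟩ := aux_gen A1 A1d hA1 B1 B1d hB1 C1 X1 X2 h1
    set U := (X1 - A1d * C1) * B1d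
    clear_value U
    have h3 : A21 * U - X3 * B2 = C2 + A2 * Rp A1 A1d * C1 * B1d - A2 * X2 * Rp B1 B1d := by
      have e : A2 * X2 = A2 * (-(Rp A1 A1d * C1 * B1d) + A1 * U + X2 * Rp B1 B1d) :=
        congrArg (fun Z => A2 * Z) g2
      have e2 : X3 * B2 = A2 * X2 - C2 := by rw [← h2]; abel
      rw [e] at e2
      rw [e2, hA21]
      simp only [Matrix.mul_add, Matrix.mul_neg, Matrix.mul_assoc]
      abel
    obtain ⟨k1, k2⟩ := aux_gen A21 A21d hA21d B2 B2d hB2 _ U X3 h3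
    have h4 : A11 * X2 * B11 = C11 := by
      have e := hE X2
      rw [← h3] at e
      have hB0 : B2 * Lp B2 B2d = 0 := by
        simp only [Lp, Matrix.mul_sub, Matrix.mul_one, ← Matrix.mul_assoc, hB2.1, sub_self]
      have hA0 : Rp A21 A21d * A21 = 0 := by
        simp only [Rp, Matrix.sub_mul, Matrix.one_mul, hA21d.1, sub_self]
      rw [Matrix.mul_sub, ← Matrix.mul_assoc, hA0, Matrix.sub_mul, Matrix.mul_assoc _ (X3 * B2),
        Matrix.mul_assoc X3, hB0, Matrix.zero_mul, Matrix.zero_mul, Matrix.mul_zero,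
        Matrix.mul_zero, sub_zero] at e
      exact (sub_eq_zero.mp e.symm).symm
    refine ⟨_, X2, A11d * A11 * X2, _, X3, _, X2, U, ?_, k1, g1, g2, ?_⟩
    · rw [← h4]
      simp only [Lp, Rp, Matrix.mul_sub, Matrix.sub_mul, Matrix.one_mul, Matrix.mul_one,
        Matrix.mul_assoc]
      abel
    · rw [← hA21]; exact k2
  · rintro ⟨W1, W2, W3, W4, W5, W6, V, U, hV, hU, rfl, hX2, hX3⟩
    have h4 : A11 * V * B11 = C11 := by
      have a0 : A11 * Lp A11 A11d = 0 := by
        simp only [Lp, Matrix.mul_sub, Matrix.mul_one, ← Matrix.mul_assoc, hA11d.1, sub_self]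
      have b0 : Rp B11 B11d * B11 = 0 := by
        simp only [Rp, Matrix.sub_mul, Matrix.one_mul, hB11d.1, sub_self]
      have c1 : A11 * A11d * C11 = C11 := by
        rw [Rp, Matrix.sub_mul, Matrix.one_mul, sub_eq_zero] at hcond2
        exact hcond2.symm
      have c2 : C11 * B11d * B11 = C11 := by
        rw [Lp, Matrix.mul_sub, Matrix.mul_one, sub_eq_zero, ← Matrix.mul_assoc] at hcond3
        exact hcond3.symm
      rw [hV, Matrix.mul_add, Matrix.mul_add, ← Matrix.mul_assoc A11 (Lp A11 A11d), a0,
        Matrix.add_mul, Matrix.add_mul, ← Matrix.mul_assoc A11 W3, Matrix.mul_assoc _ _ B11,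
        Matrix.mul_assoc _ (Rp B11 B11d) B11, b0, ← Matrix.mul_assoc A11, ← Matrix.mul_assoc A11, ← Matrix.mul_assoc A11 A11d,
        c1, c2]
      simp
    refine ⟨?_, ?_⟩
    · rw [hX2]; exact aux_conv A1 A1d hA1 B1 B1d hB1 C1 hcond1 U V W1
    · have e := hE V
      rw [h4, sub_self] at e
      have k := aux_conv A21 A21d hA21d B2 B2d hB2 _ e W4 W5 W6
      rw [← hU] at k
      rw [← hA21] at hX3
      rw [← hX3] at k
      have k2 : X3 * B2 = A21 * U -
          (C2 + A2 * Rp A1 A1d * C1 * B1d - A2 * V * Rp B1 B1d) := by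
        rw [← k]; abel
      rw [k2, hX2, hA21]
      simp only [Matrix.mul_add, Matrix.mul_neg, Matrix.mul_assoc]
      abel
end
end

section
/- Let A1 ∈ ℍ^{m1×p}, A2 ∈ ℍ^{m2×p}, B1 ∈ ℍ^{q1×n}, B2 ∈ ℍ^{q2×n}, C1 ∈ ℍ^{m1×n}, C2 ∈ ℍ^{m2×n} be quaternion matrices. Define A11 = R_{(A2 L_{A1})} A2, B11 = B1 L_{B2}, and C11 = R_{(A2 L_{A1})} (C2 − A2 A1⁺ C1) L_{B2}. Then there exist quaternion matrices X1 ∈ ℍ^{p×n}, X2 ∈ ℍ^{m1×q1}, X3 ∈ ℍ^{m2×q2} satisfying A1 X1 − X2 B1 = C1 and A2 X1 − X3 B2 = C2 if and only if R_{A1} C1 L_{B1} = 0, R_{A11} C11 = 0, and C11 L_{B11} = 0. -/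
open Matrix

noncomputable section

theorem stmt_4 {m1 m2 p q1 q2 n : ℕ}
    (A1 : Mat m1 p) (A1d : Mat p m1) (hA1 : IsMPInv A1 A1d)
    (A2 : Mat m2 p)
    (B1 : Mat q1 n) (B1d : Mat n q1) (hB1 : IsMPInv B1 B1d)
    (B2 : Mat q2 n) (B2d : Mat n q2) (hB2 : IsMPInv B2 B2d)
    (C1 : Mat m1 n) (C2 : Mat m2 n)
    (A2L : Mat m2 p) (hA2L : A2L = A2 * Lp A1 A1d)
    (A2Ld : Mat p m2) (hA2Ld : IsMPInv A2L A2Ld)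
    (A11 : Mat m2 p) (hA11 : A11 = Rp A2L A2Ld * A2)
    (A11d : Mat p m2) (hA11d : IsMPInv A11 A11d)
    (B11 : Mat q1 n) (hB11 : B11 = B1 * Lp B2 B2d)
    (B11d : Mat n q1) (hB11d : IsMPInv B11 B11d)
    (C11 : Mat m2 n)
    (hC11 : C11 = Rp A2L A2Ld * (C2 - A2 * A1d * C1) * Lp B2 B2d) :
    (∃ (X1 : Mat p n) (X2 : Mat m1 q1) (X3 : Mat m2 q2),
        A1 * X1 - X2 * B1 = C1 ∧ A2 * X1 - X3 * B2 = C2) ↔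
      (Rp A1 A1d * C1 * Lp B1 B1d = 0 ∧ Rp A11 A11d * C11 = 0 ∧
        C11 * Lp B11 B11d = 0) := by
  obtain ⟨hA, hA', -, -⟩ := hA1
  obtain ⟨hB, -, -, -⟩ := hB1
  obtain ⟨hE, -, -, -⟩ := hB2
  obtain ⟨hG, -, -, -⟩ := hA2Ld
  obtain ⟨hK, -, -, -⟩ := hA11d
  obtain ⟨hN, -, -, -⟩ := hB11d
  have rA : Rp A1 A1d * A1 = 0 := by simp [Rp, Matrix.sub_mul, hA]
  have lA : A1d * Rp A1 A1d = 0 := by simp [Rp, Matrix.mul_sub, ← Matrix.mul_assoc, hA']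
  have lB : B1 * Lp B1 B1d = 0 := by simp [Lp, Matrix.mul_sub, ← Matrix.mul_assoc, hB]
  have lE : B2 * Lp B2 B2d = 0 := by simp [Lp, Matrix.mul_sub, ← Matrix.mul_assoc, hE]
  have lN : B11 * Lp B11 B11d = 0 := by simp [Lp, Matrix.mul_sub, ← Matrix.mul_assoc, hN]
  have rG : Rp A2L A2Ld * A2L = 0 := by simp [Rp, Matrix.sub_mul, hG]
  have rK : Rp A11 A11d * A11 = 0 := by simp [Rp, Matrix.sub_mul, hK]
  have e2 : A2 = A2L + A2 * A1d * A1 := by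
    rw [hA2L]; simp [Lp, Matrix.mul_sub, Matrix.mul_assoc]
  have eK : A11 * A1d * A1 = A11 := by
    have h : Rp A2L A2Ld * A2 = Rp A2L A2Ld * (A2L + A2 * A1d * A1) := by rw [← e2]
    rw [Matrix.mul_add, rG, zero_add, ← hA11] at h
    refine Eq.trans ?_ h.symm
    rw [hA11]; simp only [Matrix.mul_assoc]
  constructor
  · rintro ⟨X1, X2, X3, h1, h2⟩
    have key : C11 = A11 * (A1d * X2) * B11 := by
      have h3 : C2 - A2 * A1d * C1 = A2L * X1 - X3 * B2 + A2 * A1d * X2 * B1 := by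
        have h4 : A2 * X1 = A2L * X1 + A2 * A1d * A1 * X1 := by
          rw [← Matrix.add_mul, ← e2]
        rw [← h1, ← h2, h4]
        simp only [Matrix.mul_sub, Matrix.mul_assoc]
        abel
      rw [hC11, h3, Matrix.mul_add, Matrix.mul_sub, Matrix.add_mul, Matrix.sub_mul,
        ← Matrix.mul_assoc _ A2L, rG, hA11, hB11]
      simp only [Matrix.mul_assoc, lE]
      simp
    refine ⟨?_, ?_, ?_⟩
    · rw [← h1, Matrix.mul_sub, ← Matrix.mul_assoc, rA, Matrix.zero_mul, zero_sub,
        Matrix.neg_mul, Matrix.mul_assoc, Matrix.mul_assoc, lB]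
      simp
    · rw [key, ← Matrix.mul_assoc, ← Matrix.mul_assoc, rK]; simp
    · rw [key, Matrix.mul_assoc, lN]; simp
  · rintro ⟨c1, c2, c3⟩
    have c2' : A11 * (A11d * C11) = C11 := by
      rw [Rp, Matrix.sub_mul, Matrix.one_mul, sub_eq_zero] at c2
      rw [← Matrix.mul_assoc]; exact c2.symm
    have c3' : C11 * B11d * B11 = C11 := by
      rw [Lp, Matrix.mul_sub, Matrix.mul_one, sub_eq_zero] at c3
      rw [Matrix.mul_assoc]; exact c3.symm
    obtain ⟨X2, hX2⟩ : ∃ X2, X2 = A1 * (A11d * C11 * B11d) - Rp A1 A1d * C1 * B1d := ⟨_, rfl⟩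
    have f1 : A1d * X2 = A1d * A1 * (A11d * C11 * B11d) := by
      rw [hX2, Matrix.mul_sub, ← Matrix.mul_assoc A1d (_ * _), ← Matrix.mul_assoc A1d (Rp _ _), lA]
      simp [Matrix.mul_assoc]
    have f2 : A11 * (A1d * X2) * B11 = C11 := by
      rw [f1]
      simp only [← Matrix.mul_assoc]
      rw [eK, Matrix.mul_assoc A11 A11d, c2', c3']
    have rr : Rp A1 A1d * Rp A1 A1d = Rp A1 A1d := by
      conv_lhs => rw [Rp.eq_def A1 A1d, Matrix.mul_sub, Matrix.mul_one, ← Rp.eq_def A1 A1d,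
        ← Matrix.mul_assoc, rA, Matrix.zero_mul, sub_zero]
    have f3 : Rp A1 A1d * (C1 + X2 * B1) = 0 := by
      rw [← c1, hX2, Matrix.mul_add, Matrix.sub_mul, Matrix.mul_sub]
      simp only [← Matrix.mul_assoc, rA, rr]
      simp [Lp, Matrix.mul_add, Matrix.mul_assoc, sub_eq_add_neg]
    have f4 : A1 * (A1d * (C1 + X2 * B1)) = C1 + X2 * B1 := by
      rw [Rp, Matrix.sub_mul, Matrix.one_mul, sub_eq_zero] at f3
      rw [← Matrix.mul_assoc]; exact f3.symm
    obtain ⟨D, hD⟩ : ∃ D, D = C2 - A2 * A1d * C1 - A2 * A1d * X2 * B1 := ⟨_, rfl⟩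
    have f5 : Rp A2L A2Ld * D * Lp B2 B2d = 0 := by
      rw [hD, Matrix.mul_sub, Matrix.sub_mul, ← hC11, sub_eq_zero, ← f2, hA11, hB11]
      simp only [Matrix.mul_assoc]
    have f6 : Rp A2L A2Ld * D * B2d * B2 = Rp A2L A2Ld * D := by
      rw [Lp, Matrix.mul_sub, Matrix.mul_one, sub_eq_zero] at f5
      rw [Matrix.mul_assoc _ B2d]; exact f5.symm
    have aL : A1 * Lp A1 A1d = 0 := by simp [Lp, Matrix.mul_sub, ← Matrix.mul_assoc, hA]
    refine ⟨A1d * (C1 + X2 * B1) + Lp A1 A1d * (A2Ld * D), X2, -(Rp A2L A2Ld * D * B2d), ?_, ?_⟩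
    · rw [Matrix.mul_add, f4, ← Matrix.mul_assoc, aL]; simp
    · rw [Matrix.neg_mul, f6, Matrix.mul_add, ← Matrix.mul_assoc A2 (Lp _ _), ← hA2L, Rp,
        Matrix.sub_mul, Matrix.one_mul, Matrix.mul_assoc A2L]
      have : C2 = D + A2 * (A1d * (C1 + X2 * B1)) := by
        rw [hD]; simp only [Matrix.mul_add, Matrix.mul_assoc]; abel
      rw [this]; abel
end
end

section
/- Let A1 ∈ ℍ^{m1×p}, A2 ∈ ℍ^{m2×p}, B1 ∈ ℍ^{q1×n}, B2 ∈ ℍ^{q2×n}, C1 ∈ ℍ^{m1×n}, C2 ∈ ℍ^{m2×n} be quaternion matrices, and define A11 = R_{(A2 L_{A1})} A2, B11 = B1 L_{B2}, C11 = R_{(A2 L_{A1})} (C2 − A2 A1⁺ C1) L_{B2}. Assume R_{A1} C1 L_{B1} = 0, R_{A11} C11 = 0 and C11 L_{B11} = 0. Then quaternion matrices (X1, X2, X3) of sizes p×n, m1×q1, m2×q2 satisfy A1 X1 − X2 B1 = C1 and A2 X1 − X3 B2 = C2 if and only if there exist quaternion matrices W1, W2, W3, W4, W5, W6 of appropriate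 sizes such that, setting U1 = A11⁺ C11 B11⁺ + L_{A11} W4 + W5 R_{B11} and U2 = (A2 L_{A1})⁺ (C2 − A2 A1⁺ C1 − A2 U1 B1) + W1 B2 + L_{(A2 L_{A1})} W2, one has X1 = A1⁺ C1 + U1 B1 + L_{A1} U2, X2 = −R_{A1} C1 B1⁺ + A1 U1 + W6 R_{B1}, and X3 = −R_{(A2 L_{A1})} (C2 − A2 A1⁺ C1 − A2 U1 B1) B2⁺ + A2 L_{A1} W1 + W3 R_{B2}. -/
open Matrix

noncomputable section

theorem stmt_5 {m1 m2 p q1 q2 n : ℕ}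
    (A1 : Mat m1 p) (A1d : Mat p m1) (hA1 : IsMPInv A1 A1d)
    (A2 : Mat m2 p)
    (B1 : Mat q1 n) (B1d : Mat n q1) (hB1 : IsMPInv B1 B1d)
    (B2 : Mat q2 n) (B2d : Mat n q2) (hB2 : IsMPInv B2 B2d)
    (C1 : Mat m1 n) (C2 : Mat m2 n)
    (A2L : Mat m2 p) (hA2L : A2L = A2 * Lp A1 A1d)
    (A2Ld : Mat p m2) (hA2Ld : IsMPInv A2L A2Ld)
    (A11 : Mat m2 p) (hA11 : A11 = Rp A2L A2Ld * A2)
    (A11d : Mat p m2) (hA11d : IsMPInv A11 A11d)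
    (B11 : Mat q1 n) (hB11 : B11 = B1 * Lp B2 B2d)
    (B11d : Mat n q1) (hB11d : IsMPInv B11 B11d)
    (C11 : Mat m2 n)
    (hC11 : C11 = Rp A2L A2Ld * (C2 - A2 * A1d * C1) * Lp B2 B2d)
    (hcond1 : Rp A1 A1d * C1 * Lp B1 B1d = 0)
    (hcond2 : Rp A11 A11d * C11 = 0)
    (hcond3 : C11 * Lp B11 B11d = 0)
    (X1 : Mat p n) (X2 : Mat m1 q1) (X3 : Mat m2 q2) :
    (A1 * X1 - X2 * B1 = C1 ∧ A2 * X1 - X3 * B2 = C2) ↔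
      (∃ (W1 : Mat p q2) (W2 : Mat p n) (W3 : Mat m2 q2) (W4 : Mat p q1)
          (W5 : Mat p q1) (W6 : Mat m1 q1) (U1 : Mat p q1) (U2 : Mat p n),
        U1 = A11d * C11 * B11d + Lp A11 A11d * W4 + W5 * Rp B11 B11d ∧
        U2 = A2Ld * (C2 - A2 * A1d * C1 - A2 * U1 * B1)
              + W1 * B2 + Lp A2L A2Ld * W2 ∧
        X1 = A1d * C1 + U1 * B1 + Lp A1 A1d * U2 ∧
        X2 = -(Rp A1 A1d * C1 * B1d) + A1 * U1 + W6 * Rp B1 B1d ∧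
        X3 = -(Rp A2L A2Ld * (C2 - A2 * A1d * C1 - A2 * U1 * B1) * B2d)
              + A2 * Lp A1 A1d * W1 + W3 * Rp B2 B2d) := by
  obtain ⟨a1, -⟩ := hA1
  obtain ⟨b1, -⟩ := hB1
  obtain ⟨b2, -⟩ := hB2
  obtain ⟨a2, -⟩ := hA2Ld
  obtain ⟨a11, -⟩ := hA11d
  obtain ⟨b11, -⟩ := hB11d
  have hR : ∀ U : Mat p q1, Rp A2L A2Ld * (C2 - A2 * A1d * C1 - A2 * U * B1) * Lp B2 B2d
      = C11 - A11 * U * B11 := by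
    intro U
    rw [hC11, hA11, hB11]
    simp only [Matrix.mul_sub, Matrix.sub_mul, Matrix.mul_assoc]
  have c2 : A11 * (A11d * C11) = C11 := by
    have := hcond2
    simp only [Rp, Matrix.sub_mul, Matrix.one_mul, Matrix.mul_assoc] at this
    exact (sub_eq_zero.mp this).symm
  have c3 : C11 * (B11d * B11) = C11 := by
    have := hcond3
    simp only [Lp, Matrix.mul_sub, Matrix.mul_one] at this
    exact (sub_eq_zero.mp this).symm
  have zL : ∀ {a b : ℕ} {A : Mat a b} {Ad : Mat b a}, A * Ad * A = A → A * Lp A Ad = 0 := by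
    intro a b A Ad h
    simp [Lp, Matrix.mul_sub, ← Matrix.mul_assoc, h]
  have zR : ∀ {a b : ℕ} {A : Mat a b} {Ad : Mat b a}, A * Ad * A = A → Rp A Ad * A = 0 := by
    intro a b A Ad h
    simp [Rp, Matrix.sub_mul, h]
  constructor
  · rintro ⟨h1, h2⟩
    have hX1 : X1 = A1d * C1 + A1d * X2 * B1 + Lp A1 A1d * X1 := by
      rw [← h1]
      simp only [Lp, Matrix.mul_sub, Matrix.sub_mul, Matrix.one_mul, Matrix.mul_assoc]
      abel
    have hE : C2 - A2 * A1d * C1 - A2 * (A1d * X2) * B1 = A2L * X1 - X3 * B2 := by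
      have h3 : A2 * X1 = A2 * A1d * C1 + A2 * (A1d * X2) * B1 + A2L * X1 := by
        conv_lhs => rw [hX1]
        rw [hA2L]
        simp only [Matrix.mul_add, Matrix.mul_assoc]
      rw [← h2, h3]
      abel
    have hU : A11 * (A1d * X2) * B11 = C11 := by
      have := hR (A1d * X2)
      rw [hE, Matrix.mul_sub, ← Matrix.mul_assoc, zR a2, Matrix.zero_mul, zero_sub,
        Matrix.neg_mul, Matrix.mul_assoc, Matrix.mul_assoc, zL b2, Matrix.mul_zero,
        Matrix.mul_zero, neg_zero] at this
      exact (sub_eq_zero.mp this.symm).symm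
    refine ⟨A2Ld * X3, X1, Rp A2L A2Ld * X3, A1d * X2, A11d * A11 * (A1d * X2),
      Rp A1 A1d * X2, A1d * X2, X1, ?_, ?_, hX1, ?_, ?_⟩
    · rw [← hU]
      simp only [Lp, Rp, Matrix.mul_sub, Matrix.sub_mul, Matrix.one_mul, Matrix.mul_one,
        Matrix.mul_assoc]
      abel
    · rw [hE]
      simp only [Lp, Matrix.mul_sub, Matrix.sub_mul, Matrix.one_mul, Matrix.mul_assoc]
      abel
    · have : Rp A1 A1d * C1 = - (Rp A1 A1d * X2 * B1) := by
        rw [← h1, Matrix.mul_sub, ← Matrix.mul_assoc, zR a1, Matrix.zero_mul, zero_sub,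
          Matrix.mul_assoc]
      rw [this]
      simp only [Rp, Matrix.mul_sub, Matrix.sub_mul, Matrix.one_mul, Matrix.mul_one,
        Matrix.mul_assoc, Matrix.neg_mul]
      abel
    · rw [hE, Matrix.mul_sub, ← Matrix.mul_assoc, zR a2, Matrix.zero_mul, zero_sub, ← hA2L]
      simp only [Rp, Matrix.mul_sub, Matrix.sub_mul, Matrix.one_mul, Matrix.mul_one,
        Matrix.mul_assoc, Matrix.neg_mul]
      abel
  · rintro ⟨W1, W2, W3, W4, W5, W6, U1, U2, hU1, hU2, rfl, rfl, rfl⟩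
    have hU : A11 * U1 * B11 = C11 := by
      rw [hU1]
      simp only [Matrix.mul_add, Matrix.add_mul]
      rw [← Matrix.mul_assoc A11 (Lp A11 A11d), zL a11, Matrix.mul_assoc A11 (W5 * _),
        Matrix.mul_assoc W5, zR b11, ← Matrix.mul_assoc A11, c2, Matrix.mul_assoc, c3]
      simp
    constructor
    · have e : Rp A1 A1d * C1 * B1d * B1 = Rp A1 A1d * C1 := by
        have := hcond1
        rw [Lp, Matrix.mul_sub, Matrix.mul_one, sub_eq_zero] at this
        rw [Matrix.mul_assoc, ← this]
      rw [Matrix.add_mul, Matrix.add_mul, Matrix.neg_mul, e, Matrix.mul_assoc W6, zR b1,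
        Matrix.mul_add, Matrix.mul_add, ← Matrix.mul_assoc A1 (Lp _ _), zL a1]
      simp only [Rp, Matrix.sub_mul, Matrix.one_mul, Matrix.mul_assoc, Matrix.mul_zero,
        Matrix.zero_mul]
      abel
    · have e := hR U1
      rw [hU, sub_self] at e
      have k : A2L * U2 = A2L * A2Ld * (C2 - A2 * A1d * C1 - A2 * U1 * B1) + A2L * W1 * B2 := by
        rw [hU2, Matrix.mul_add, Matrix.mul_add, ← Matrix.mul_assoc A2L (Lp _ _), zL a2]
        simp only [Matrix.mul_assoc, Matrix.zero_mul, add_zero]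
      rw [Matrix.mul_add, Matrix.mul_add, ← Matrix.mul_assoc A2 (Lp _ _), ← hA2L, k]
      have hD : A2 * (A1d * C1) + A2 * (U1 * B1)
          = C2 - (C2 - A2 * A1d * C1 - A2 * U1 * B1) := by
        simp only [Matrix.mul_assoc]
        abel
      rw [hD]
      generalize C2 - A2 * A1d * C1 - A2 * U1 * B1 = E at *
      rw [Lp, Matrix.mul_sub, Matrix.mul_one, sub_eq_zero, ← Matrix.mul_assoc] at e
      rw [Matrix.add_mul, Matrix.add_mul, Matrix.neg_mul, ← e, Matrix.mul_assoc W3, zR b2]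
      simp only [Rp, Matrix.sub_mul, Matrix.one_mul, Matrix.mul_zero]
      abel
end
end

section
/- Let A1 ∈ ℍ^{m×p1}, B1 ∈ ℍ^{q1×n}, C3 ∈ ℍ^{m×r3}, D3 ∈ ℍ^{s3×n}, C4 ∈ ℍ^{m×r4}, D4 ∈ ℍ^{s4×n}, E1 ∈ ℍ^{m×n} be quaternion matrices. Define A = R_{A1} C3, B = D3 L_{B1}, C = R_{A1} C4, D = D4 L_{B1}, E = R_{A1} E1 L_{B1}, M = R_A C, and N = D L_B. Then there exist quaternion matrices X1 ∈ ℍ^{p1×n}, X2 ∈ ℍ^{m×q1}, X3 ∈ ℍ^{r3×s3}, X4 ∈ ℍ^{r4×s4} satisfying A1 X1 + X2 B1 + C3 X3 D3 + C4 X4 D4 = E1 if and only if R_M R_A E = 0, E L_B L_N = 0, R_A E L_D = 0, and R_C E L_B = 0. -/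
open Matrix

noncomputable section

theorem Rp_mul_self' {a b : ℕ} {A : Mat a b} {Ad : Mat b a} (h : IsMPInv A Ad) :
    Rp A Ad * A = 0 := by
  rw [Rp, Matrix.sub_mul, Matrix.one_mul, h.1, sub_self]

theorem mul_Lp_self' {a b : ℕ} {A : Mat a b} {Ad : Mat b a} (h : IsMPInv A Ad) :
    A * Lp A Ad = 0 := by
  rw [Lp, Matrix.mul_sub, Matrix.mul_one, ← Matrix.mul_assoc, h.1, sub_self]

theorem eq_of_Rp' {a b c : ℕ} {A : Mat a b} {Ad : Mat b a} {F : Mat a c}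
    (h : Rp A Ad * F = 0) : A * (Ad * F) = F := by
  rw [Rp, Matrix.sub_mul, Matrix.one_mul, sub_eq_zero, Matrix.mul_assoc] at h
  exact h.symm

theorem eq_of_Lp' {a b c : ℕ} {A : Mat a b} {Ad : Mat b a} {F : Mat c b}
    (h : F * Lp A Ad = 0) : F * Ad * A = F := by
  rw [Lp, Matrix.mul_sub, Matrix.mul_one, sub_eq_zero, ← Matrix.mul_assoc] at h
  exact h.symm

theorem solve_one {a b c d : ℕ} {A : Mat a b} {Ad : Mat b a} {B : Mat c d} {Bd : Mat d c}
    {F : Mat a d} (h : Rp A Ad * F = 0) (h' : F * Lp B Bd = 0) :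
    A * (Ad * F * Bd) * B = F := by
  rw [← Matrix.mul_assoc, eq_of_Rp' h, eq_of_Lp' h']

theorem solve_pair {m n r s r' s' : ℕ} {A : Mat m r} {Ad : Mat r m} {B : Mat s n}
    {Bd : Mat n s} {C : Mat m r'} {Cd : Mat r' m} {D : Mat s' n} {Dd : Mat n s'} {E : Mat m n}
    {Md : Mat r' m} {Nd : Mat n s'}
    (h1 : Rp (Rp A Ad * C) Md * Rp A Ad * E = 0)
    (h2 : E * Lp B Bd * Lp (D * Lp B Bd) Nd = 0)
    (h3 : Rp A Ad * E * Lp D Dd = 0) (h4 : Rp C Cd * E * Lp B Bd = 0)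
    (hC : IsMPInv C Cd) (hN : IsMPInv (D * Lp B Bd) Nd) :
    ∃ (X : Mat r s) (Y : Mat r' s'), A * X * B + C * Y * D = E := by
  generalize hP : Rp A Ad = P at *
  generalize hQ : Lp B Bd = Q at *
  rw [Matrix.mul_assoc] at h1 h4
  have e1 := solve_one h1 h3
  set Y1 : Mat r' s' := Md * (P * E) * Dd with hY1
  obtain ⟨G, hG⟩ : ∃ G, G = E * Q - C * Y1 * (D * Q) := ⟨_, rfl⟩
  have g1 : Rp C Cd * G = 0 := by
    rw [hG, Matrix.mul_sub, h4, ← Matrix.mul_assoc, ← Matrix.mul_assoc, ← Matrix.mul_assoc,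
      Rp_mul_self' hC]
    simp
  have g2 : G * Lp (D * Q) Nd = 0 := by
    rw [hG, Matrix.sub_mul, h2, Matrix.mul_assoc, mul_Lp_self' hN]
    simp
  have g3 : P * G = 0 := by
    rw [hG, Matrix.mul_sub, sub_eq_zero, ← Matrix.mul_assoc, ← e1]
    simp only [Matrix.mul_assoc]
  have e2 := solve_one g1 g2
  obtain ⟨Z, hZ⟩ : ∃ Z, Z = Cd * G * Nd := ⟨_, rfl⟩
  have e3 : P * (C * Z * D) = 0 := by
    have : C * Z = G * Nd := by
      rw [hZ, ← Matrix.mul_assoc, eq_of_Rp' g1]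
    rw [this, ← Matrix.mul_assoc, ← Matrix.mul_assoc, g3]
    simp
  rw [← hZ] at e2
  have k1 : P * (E - C * (Y1 + Z) * D) = 0 := by
    rw [Matrix.mul_add, Matrix.add_mul, Matrix.mul_sub, Matrix.mul_add, e3, add_zero,
      sub_eq_zero]
    conv_lhs => rw [← e1]
    simp only [Matrix.mul_assoc]
  have k2 : (E - C * (Y1 + Z) * D) * Q = 0 := by
    rw [Matrix.sub_mul, Matrix.mul_assoc (C * _), Matrix.mul_add, Matrix.add_mul, e2, hG]
    abel
  subst hP hQ
  refine ⟨Ad * (E - C * (Y1 + Z) * D) * Bd, Y1 + Z, ?_⟩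
  rw [solve_one k1 k2]
  abel

theorem stmt_6 {m p1 q1 n r3 s3 r4 s4 : ℕ}
    (A1 : Mat m p1) (A1d : Mat p1 m) (hA1 : IsMPInv A1 A1d)
    (B1 : Mat q1 n) (B1d : Mat n q1) (hB1 : IsMPInv B1 B1d)
    (C3 : Mat m r3) (D3 : Mat s3 n) (C4 : Mat m r4) (D4 : Mat s4 n)
    (E1 : Mat m n)
    (A : Mat m r3) (hA : A = Rp A1 A1d * C3)
    (Ad : Mat r3 m) (hAd : IsMPInv A Ad)
    (B : Mat s3 n) (hB : B = D3 * Lp B1 B1d)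
    (Bd : Mat n s3) (hBd : IsMPInv B Bd)
    (C : Mat m r4) (hC : C = Rp A1 A1d * C4)
    (Cd : Mat r4 m) (hCd : IsMPInv C Cd)
    (D : Mat s4 n) (hD : D = D4 * Lp B1 B1d)
    (Dd : Mat n s4) (hDd : IsMPInv D Dd)
    (E : Mat m n) (hE : E = Rp A1 A1d * E1 * Lp B1 B1d)
    (M : Mat m r4) (hM : M = Rp A Ad * C)
    (Md : Mat r4 m) (hMd : IsMPInv M Md)
    (N : Mat s4 n) (hN : N = D * Lp B Bd)
    (Nd : Mat n s4) (hNd : IsMPInv N Nd) :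
    (∃ (X1 : Mat p1 n) (X2 : Mat m q1) (X3 : Mat r3 s3) (X4 : Mat r4 s4),
        A1 * X1 + X2 * B1 + C3 * X3 * D3 + C4 * X4 * D4 = E1) ↔
      (Rp M Md * Rp A Ad * E = 0 ∧ E * Lp B Bd * Lp N Nd = 0 ∧
        Rp A Ad * E * Lp D Dd = 0 ∧ Rp C Cd * E * Lp B Bd = 0) := by
  subst hM hN
  constructor
  · rintro ⟨X1, X2, X3, X4, h⟩
    have hEq : E = A * X3 * B + C * X4 * D := by
      have a : Rp A1 A1d * (A1 * X1) = 0 := by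
        rw [← Matrix.mul_assoc, Rp_mul_self' hA1, Matrix.zero_mul]
      have b : Rp A1 A1d * (X2 * B1) * Lp B1 B1d = 0 := by
        rw [Matrix.mul_assoc, Matrix.mul_assoc, mul_Lp_self' hB1]
        simp
      rw [hE, ← h, Matrix.mul_add, Matrix.mul_add, Matrix.mul_add, a, zero_add,
        Matrix.add_mul, Matrix.add_mul, b, zero_add, hA, hB, hC, hD]
      simp only [Matrix.mul_assoc]
    have l : Rp A Ad * E = Rp A Ad * C * X4 * D := by
      rw [hEq, Matrix.mul_add, ← Matrix.mul_assoc, ← Matrix.mul_assoc, Rp_mul_self' hAd]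
      simp [Matrix.mul_assoc]
    have r : E * Lp B Bd = C * X4 * (D * Lp B Bd) := by
      rw [hEq, Matrix.add_mul, Matrix.mul_assoc _ B, mul_Lp_self' hBd]
      simp [Matrix.mul_assoc]
    refine ⟨?_, ?_, ?_, ?_⟩
    · rw [Matrix.mul_assoc, l, ← Matrix.mul_assoc, ← Matrix.mul_assoc, Rp_mul_self' hMd]
      simp
    · rw [r, Matrix.mul_assoc, mul_Lp_self' hNd]
      simp
    · rw [l, Matrix.mul_assoc, mul_Lp_self' hDd]
      simp
    · rw [Matrix.mul_assoc, r, ← Matrix.mul_assoc, ← Matrix.mul_assoc, ← Matrix.mul_assoc,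
        Rp_mul_self' hCd]
      simp
  · rintro ⟨h1, h2, h3, h4⟩
    obtain ⟨X, Y, h⟩ := solve_pair h1 h2 h3 h4 hCd hNd
    obtain ⟨W, hW⟩ : ∃ W, W = E1 - C3 * X * D3 - C4 * Y * D4 := ⟨_, rfl⟩
    have w : Rp A1 A1d * W * Lp B1 B1d = 0 := by
      rw [hW, Matrix.mul_sub, Matrix.mul_sub, Matrix.sub_mul, Matrix.sub_mul, ← hE, ← h,
        hA, hB, hC, hD]
      simp only [Matrix.mul_assoc]
      abel
    have w2 := eq_of_Lp' w
    refine ⟨A1d * W, Rp A1 A1d * W * B1d, X, Y, ?_⟩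
    have w3 : A1 * (A1d * W) + Rp A1 A1d * W = W := by
      rw [Rp, Matrix.sub_mul, Matrix.one_mul, Matrix.mul_assoc]
      abel
    rw [w2, w3, hW]
    abel
end
end

section
/- Let A1 ∈ ℍ^{m×p1}, B1 ∈ ℍ^{q1×n}, C3 ∈ ℍ^{m×r3}, D3 ∈ ℍ^{s3×n}, C4 ∈ ℍ^{m×r4}, D4 ∈ ℍ^{s4×n}, E1 ∈ ℍ^{m×n} be quaternion matrices, and define A = R_{A1} C3, B = D3 L_{B1}, C = R_{A1} C4, D = D4 L_{B1}, E = R_{A1} E1 L_{B1}, M = R_A C, N = D L_B, S = C L_M. Assume R_M R_A E = 0, E L_B L_N = 0, R_A E L_D = 0 and R_C E L_B = 0. Then quaternion matrices (X1, X2, X3, X4) of sizes p1×n, m×q1, r3×s3, r4×s4 satisfy A1 X1 + X2 B1 + C3 X3 D3 + C4 X4 D4 = E1 if and only if there exist quaternion matrices T1, T2, T3, T4, T5, T6, T7, T8 of appropriate sizes such that X3 = A⁺ E B⁺ − A⁺ C M⁺ E B⁺ − A⁺ S C⁺ E N⁺ D B⁺ − A⁺ S T2 R_N D B⁺ + L_A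 T4 + T5 R_B, X4 = M⁺ E D⁺ + S⁺ S C⁺ E N⁺ + L_M L_S T1 + L_M T2 R_N + T3 R_D, X1 = A1⁺ (E1 − C3 X3 D3 − C4 X4 D4) − A1⁺ T7 B1 + L_{A1} T6, and X2 = R_{A1} (E1 − C3 X3 D3 − C4 X4 D4) B1⁺ + A1 A1⁺ T7 + T8 R_{B1}. -/
open Matrix

noncomputable section

theorem aux_left {a b : ℕ} {M : Mat a b} {Md : Mat b a} (h : IsMPInv M Md) (P : Mat a a)
    (C : Mat a b) (hP : Pᴴ = P) (hPP : P * P = P) (hM : M = P * C) : Md * P = Md := by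
  obtain ⟨_, h2, h3, _⟩ := h
  have e : Mᴴ * P = Mᴴ := by
    rw [hM, conjTranspose_mul, hP, Matrix.mul_assoc, hPP]
  have e2 : Md = Md * (Mdᴴ * Mᴴ) := by
    rw [← conjTranspose_mul, h3, ← Matrix.mul_assoc, h2]
  rw [e2, Matrix.mul_assoc, Matrix.mul_assoc, e]

theorem aux_right {a b : ℕ} {M : Mat a b} {Md : Mat b a} (h : IsMPInv M Md) (P : Mat b b)
    (C : Mat a b) (hP : Pᴴ = P) (hPP : P * P = P) (hM : M = C * P) : P * Md = Md := by
  obtain ⟨_, h2, _, h4⟩ := h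
  have e : P * Mᴴ = Mᴴ := by
    rw [hM, conjTranspose_mul, hP, ← Matrix.mul_assoc, hPP]
  have e2 : Md = (Mᴴ * Mdᴴ) * Md := by
    rw [← conjTranspose_mul, h4, h2]
  rw [e2, ← Matrix.mul_assoc, ← Matrix.mul_assoc, e]

theorem Rp_props {a b : ℕ} {M : Mat a b} {Md : Mat b a} (h : IsMPInv M Md) :
    (Rp M Md)ᴴ = Rp M Md ∧ Rp M Md * Rp M Md = Rp M Md ∧ Rp M Md * M = 0 := by
  obtain ⟨h1, h2, h3, h4⟩ := h
  have z : Rp M Md * M = 0 := by simp [Rp, Matrix.sub_mul, h1]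
  refine ⟨by simp [Rp, conjTranspose_sub, h3, -conjTranspose_mul], ?_, z⟩
  conv_lhs => rw [show Rp M Md * Rp M Md = Rp M Md * (1 - M * Md) from rfl]
  rw [Matrix.mul_sub, ← Matrix.mul_assoc, z]; simp

theorem Lp_props {a b : ℕ} {M : Mat a b} {Md : Mat b a} (h : IsMPInv M Md) :
    (Lp M Md)ᴴ = Lp M Md ∧ Lp M Md * Lp M Md = Lp M Md ∧ M * Lp M Md = 0 := by
  obtain ⟨h1, h2, h3, h4⟩ := h
  have z : M * Lp M Md = 0 := by simp [Lp, Matrix.mul_sub, ← Matrix.mul_assoc, h1]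
  refine ⟨by simp [Lp, conjTranspose_sub, h4, -conjTranspose_mul], ?_, z⟩
  conv_lhs => rw [show Lp M Md * Lp M Md = (1 - Md * M) * Lp M Md from rfl]
  rw [Matrix.sub_mul, Matrix.mul_assoc, z]; simp

theorem sylv {m p n q : ℕ} (A1 : Mat m p) (A1d : Mat p m) (hA1 : IsMPInv A1 A1d)
    (B1 : Mat q n) (B1d : Mat n q) (hB1 : IsMPInv B1 B1d) (F : Mat m n)
    (X1 : Mat p n) (X2 : Mat m q) :
    A1 * X1 + X2 * B1 = F ↔ Rp A1 A1d * F * Lp B1 B1d = 0 ∧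
      ∃ (T6 : Mat p n) (T7 T8 : Mat m q),
        X1 = A1d * F - A1d * T7 * B1 + Lp A1 A1d * T6 ∧
        X2 = Rp A1 A1d * F * B1d + A1 * A1d * T7 + T8 * Rp B1 B1d := by
  obtain ⟨-, -, ra⟩ := Rp_props hA1
  obtain ⟨-, -, la⟩ := Lp_props hA1
  obtain ⟨-, -, rb⟩ := Rp_props hB1
  obtain ⟨-, -, lb⟩ := Lp_props hB1
  constructor
  · rintro rfl
    refine ⟨?_, X1, X2, Rp A1 A1d * X2, ?_, ?_⟩
    · rw [Matrix.mul_add, ← Matrix.mul_assoc, ra, Matrix.zero_mul, zero_add, Matrix.mul_assoc,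
        Matrix.mul_assoc, lb]; simp
    · simp only [Lp, Matrix.mul_add, Matrix.sub_mul, Matrix.one_mul, Matrix.mul_assoc]; abel
    · rw [Matrix.mul_add, ← Matrix.mul_assoc, ra, Matrix.zero_mul, zero_add]
      simp only [Rp, Matrix.mul_sub, Matrix.sub_mul, Matrix.one_mul, Matrix.mul_one,
        Matrix.mul_assoc]; abel
  · rintro ⟨h, T6, T7, T8, rfl, rfl⟩
    have e1 : A1 * (Lp A1 A1d * T6) = 0 := by rw [← Matrix.mul_assoc, la, Matrix.zero_mul]
    have e2 : T8 * Rp B1 B1d * B1 = 0 := by rw [Matrix.mul_assoc, rb, Matrix.mul_zero]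
    rw [Matrix.mul_add, Matrix.add_mul, e1, e2, add_zero, add_zero, eq_comm, ← sub_eq_zero]
    refine Eq.trans ?_ h
    simp only [Rp, Lp, Matrix.mul_sub, Matrix.sub_mul, Matrix.one_mul, Matrix.mul_one,
      Matrix.add_mul, Matrix.mul_assoc]; abel

theorem core {m n r3 s3 r4 s4 : ℕ}
    (A : Mat m r3) (Ad : Mat r3 m) (hAd : IsMPInv A Ad)
    (B : Mat s3 n) (Bd : Mat n s3) (hBd : IsMPInv B Bd)
    (C : Mat m r4) (Cd : Mat r4 m) (hCd : IsMPInv C Cd)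
    (D : Mat s4 n) (Dd : Mat n s4) (hDd : IsMPInv D Dd)
    (E : Mat m n)
    (M : Mat m r4) (hM : M = Rp A Ad * C) (Md : Mat r4 m) (hMd : IsMPInv M Md)
    (N : Mat s4 n) (hN : N = D * Lp B Bd) (Nd : Mat n s4) (hNd : IsMPInv N Nd)
    (S : Mat m r4) (hS : S = C * Lp M Md) (Sd : Mat r4 m) (hSd : IsMPInv S Sd)
    (hcond1 : Rp M Md * Rp A Ad * E = 0)
    (hcond2 : E * Lp B Bd * Lp N Nd = 0)
    (hcond3 : Rp A Ad * E * Lp D Dd = 0)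
    (hcond4 : Rp C Cd * E * Lp B Bd = 0)
    (X : Mat r3 s3) (Y : Mat r4 s4) :
    A * X * B + C * Y * D = E ↔ ∃ (T1 T2 T3 : Mat r4 s4) (T4 T5 : Mat r3 s3),
        X = Ad * E * Bd - Ad * C * Md * E * Bd - Ad * S * Cd * E * Nd * D * Bd
              - Ad * S * T2 * Rp N Nd * D * Bd + Lp A Ad * T4 + T5 * Rp B Bd ∧
        Y = Md * E * Dd + Sd * S * Cd * E * Nd + Lp M Md * Lp S Sd * T1
              + Lp M Md * T2 * Rp N Nd + T3 * Rp D Dd := by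
  obtain ⟨hra, rra, ra⟩ := Rp_props hAd
  obtain ⟨-, -, la⟩ := Lp_props hAd
  obtain ⟨-, -, rb⟩ := Rp_props hBd
  obtain ⟨hlb, llb, lb⟩ := Lp_props hBd
  obtain ⟨hlm, llm, lm⟩ := Lp_props hMd
  obtain ⟨-, -, ls⟩ := Lp_props hSd
  obtain ⟨-, -, rd⟩ := Rp_props hDd
  obtain ⟨-, -, rn⟩ := Rp_props hNd
  have c1 := hCd.1
  have s1 := hSd.1
  have f1 : Md * Rp A Ad = Md := aux_left hMd _ C hra rra hM
  have f2 : Lp B Bd * Nd = Nd := aux_right hNd _ D hlb llb hN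
  have f3 : Lp M Md * Sd = Sd := aux_right hSd _ C hlm llm hS
  have f4 : Md * C = Md * M := by rw [hM, ← Matrix.mul_assoc, f1]
  have f5 : Rp A Ad * S = 0 := by rw [hS, ← Matrix.mul_assoc, ← hM, lm]
  have f6 : C * Sd = S * Sd := by rw [hS, Matrix.mul_assoc, f3]
  have f7 : M * Cd * C = M := by rw [hM, Matrix.mul_assoc, Matrix.mul_assoc, ← Matrix.mul_assoc C, c1]
  have f8 : S * Cd * C = S := by
    have : S * Cd * C = C * Cd * C - C * Md * (M * Cd * C) := by
      rw [hS]; simp only [Lp, Matrix.mul_sub, Matrix.sub_mul, Matrix.mul_one, Matrix.mul_assoc]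
    rw [this, f7, c1, hS]; simp only [Lp, Matrix.mul_sub, Matrix.mul_one, Matrix.mul_assoc]
  have f9 : A * Ad * S = S := by
    have := f5
    rw [Rp, Matrix.sub_mul, Matrix.one_mul, sub_eq_zero] at this
    exact this.symm
  constructor
  · intro h
    have g1 : Md * E = Md * M * Y * D := by
      rw [← f1, ← h, Matrix.mul_add, Matrix.mul_assoc Md, Matrix.mul_assoc Md,
        ← Matrix.mul_assoc (Rp A Ad), ← Matrix.mul_assoc (Rp A Ad) A, ra, f1, Matrix.mul_assoc C,
        ← Matrix.mul_assoc (Rp A Ad), ← hM]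
      simp [Matrix.mul_assoc]
    have g2 : E * Nd = C * Y * N * Nd := by
      rw [← f2, ← Matrix.mul_assoc, ← h, Matrix.add_mul, Matrix.mul_assoc _ B, lb, Matrix.mul_zero,
        zero_add, Matrix.mul_assoc _ D, ← hN, f2]
    have g3 : S * Cd * E * Nd = S * Y * N * Nd := by
      rw [Matrix.mul_assoc _ E, g2]
      conv_rhs => rw [← f8]
      simp only [Matrix.mul_assoc]
    have g4 : C * Md * E = C * Md * M * Y * D := by
      rw [Matrix.mul_assoc, g1]; simp only [Matrix.mul_assoc]
    refine ⟨Y, Sd * S * Y, Md * M * Y, X, Ad * A * X, ?_, ?_⟩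
    · have k : E * Bd - C * Md * E * Bd - S * Cd * E * Nd * D * Bd
          - S * (Sd * S * Y) * Rp N Nd * D * Bd = A * X * B * Bd := by
        have k1 : S * (Sd * S * Y) = S * Y := by
          rw [← Matrix.mul_assoc, ← Matrix.mul_assoc, s1]
        rw [k1, g3, g4, ← h, hS]
        simp only [Lp, Rp, Matrix.mul_sub, Matrix.sub_mul, Matrix.add_mul, Matrix.one_mul,
          Matrix.mul_one, Matrix.mul_assoc]; abel
      have k2 := congrArg (fun Z => Ad * Z) k
      simp only [Matrix.mul_sub] at k2
      simp only [Matrix.mul_assoc] at k2 ⊢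
      rw [k2]
      simp only [Lp, Rp, Matrix.mul_sub, Matrix.sub_mul, Matrix.one_mul,
          Matrix.mul_one, Matrix.mul_assoc]; abel
    · have k0 : Sd * S * Cd * E * Nd = Sd * S * Y * N * Nd := by
        have := congrArg (fun Z => Sd * Z) g3
        simpa only [Matrix.mul_assoc] using this
      have k1 : Lp M Md * (Sd * S * Y) = Sd * S * Y := by
        rw [← Matrix.mul_assoc, ← Matrix.mul_assoc, f3]
      have k2 : Lp M Md * Lp S Sd = Lp M Md - Sd * S := by
        conv_lhs => rw [Lp.eq_1 S]
        rw [Matrix.mul_sub, ← Matrix.mul_assoc, f3, Matrix.mul_one]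
      rw [k0, k1, k2, g1]
      simp only [Lp, Rp, Matrix.mul_sub, Matrix.sub_mul, Matrix.one_mul,
          Matrix.mul_one, Matrix.mul_assoc]; abel
  · rintro ⟨T1, T2, T3, T4, T5, rfl, rfl⟩
    have z1 : A * (Lp A Ad * T4) = 0 := by rw [← Matrix.mul_assoc, la, Matrix.zero_mul]
    have z2 : T5 * Rp B Bd * B = 0 := by rw [Matrix.mul_assoc, rb, Matrix.mul_zero]
    have z3 : T3 * Rp D Dd * D = 0 := by rw [Matrix.mul_assoc, rd, Matrix.mul_zero]
    have z4 : C * (Lp M Md * Lp S Sd * T1) = 0 := by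
      rw [← Matrix.mul_assoc, ← Matrix.mul_assoc, ← hS, ls, Matrix.zero_mul]
    have z5 : S * T2 * Rp N Nd * D * Lp B Bd = 0 := by
      rw [Matrix.mul_assoc _ D, ← hN, Matrix.mul_assoc _ _ N, rn, Matrix.mul_zero]
    -- first block
    have p1 : A * (Ad * E * Bd - Ad * C * Md * E * Bd - Ad * S * Cd * E * Nd * D * Bd
              - Ad * S * T2 * Rp N Nd * D * Bd + Lp A Ad * T4 + T5 * Rp B Bd) * B
        = (A * Ad * E - A * Ad * C * Md * E - S * Cd * E * Nd * D
              - S * T2 * Rp N Nd * D) * (Bd * B) := by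
      have : A * (T5 * Rp B Bd) * B = 0 := by
        rw [Matrix.mul_assoc, z2, Matrix.mul_zero]
      rw [Matrix.mul_add, Matrix.mul_add, z1, Matrix.add_mul, this]
      conv_rhs => rw [← f9]
      simp only [Matrix.mul_sub, Matrix.sub_mul, Matrix.mul_assoc, add_zero]
    have e1 : Md * E * Dd * D = Md * E := by
      have := congrArg (fun Z => Md * Z) hcond3
      simp only [← Matrix.mul_assoc, f1, Matrix.mul_zero] at this
      rw [Lp, Matrix.mul_sub, Matrix.mul_one, sub_eq_zero] at this
      rw [Matrix.mul_assoc]; exact this.symm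
    have e2 : C * (Sd * S * Cd * E * Nd) = S * Cd * E * Nd := by
      simp only [← Matrix.mul_assoc]
      rw [f6, s1]
    have e3 : E * Nd * D * Lp B Bd = E * Lp B Bd := by
      rw [Matrix.mul_assoc _ D, ← hN]
      conv_lhs => rw [← f2]
      have := hcond2
      rw [Lp.eq_1 N, Matrix.mul_sub, Matrix.mul_one, sub_eq_zero] at this
      conv_rhs => rw [this]
      simp only [Matrix.mul_assoc]
    have e4 : M * Md * E = Rp A Ad * E := by
      have := hcond1
      rw [Rp.eq_1 M, Matrix.sub_mul, Matrix.one_mul, Matrix.sub_mul, sub_eq_zero] at this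
      rw [this, Matrix.mul_assoc M Md (Rp A Ad), f1]
    have e5 : S * Cd * E * Lp B Bd = E * Lp B Bd - C * Md * E * Lp B Bd := by
      have q : C * Cd * E * Lp B Bd = E * Lp B Bd := by
        have := hcond4
        rw [Rp, Matrix.sub_mul, Matrix.one_mul, Matrix.sub_mul, sub_eq_zero] at this
        exact this.symm
      have q2 : S * Cd * E * Lp B Bd = C * Cd * E * Lp B Bd
          - C * (Md * M) * (Cd * E * Lp B Bd) := by
        rw [hS, Lp.eq_1 M]
        simp only [Matrix.mul_sub, Matrix.sub_mul, Matrix.mul_one, Matrix.mul_assoc]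
      rw [q2, q, ← f4]
      have q3 : C * (Md * C) * (Cd * E * Lp B Bd) = C * Md * (C * Cd * E * Lp B Bd) := by
        simp only [Matrix.mul_assoc]
      rw [q3, q]; simp only [Matrix.mul_assoc]
    have p2 : C * (Md * E * Dd + Sd * S * Cd * E * Nd + Lp M Md * Lp S Sd * T1
              + Lp M Md * T2 * Rp N Nd + T3 * Rp D Dd) * D
        = C * Md * E + S * Cd * E * Nd * D + S * T2 * Rp N Nd * D := by
      have w : C * (T3 * Rp D Dd) * D = 0 := by
        rw [Matrix.mul_assoc, z3, Matrix.mul_zero]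
      have w1 : C * (Md * E * Dd) * D = C * Md * E := by
        rw [Matrix.mul_assoc, e1, Matrix.mul_assoc]
      have w2 : C * (Lp M Md * T2 * Rp N Nd) = S * T2 * Rp N Nd := by
        rw [hS]; simp only [Matrix.mul_assoc]
      simp only [Matrix.mul_add, Matrix.add_mul]
      rw [w, w1, w2, z4, e2]; simp
    rw [p1, p2]
    have bb : Bd * B = 1 - Lp B Bd := by simp [Lp]
    have cm : C * Md * E = A * Ad * C * Md * E + Rp A Ad * E := by
      rw [← e4, hM, Rp]
      simp only [Matrix.sub_mul, Matrix.one_mul]; abel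
    have e3' : S * Cd * E * Nd * D * Lp B Bd = E * Lp B Bd - C * Md * E * Lp B Bd := by
      rw [← e5]
      have := congrArg (fun Z => S * Cd * Z) e3
      simpa only [Matrix.mul_assoc] using this
    rw [bb]
    simp only [Matrix.mul_sub, Matrix.sub_mul, Matrix.mul_one]
    rw [z5, e3', cm, Rp.eq_1 A]
    simp only [Matrix.sub_mul, Matrix.add_mul, Matrix.one_mul]
    abel

theorem stmt_7 {m p1 q1 n r3 s3 r4 s4 : ℕ}
    (A1 : Mat m p1) (A1d : Mat p1 m) (hA1 : IsMPInv A1 A1d)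
    (B1 : Mat q1 n) (B1d : Mat n q1) (hB1 : IsMPInv B1 B1d)
    (C3 : Mat m r3) (D3 : Mat s3 n) (C4 : Mat m r4) (D4 : Mat s4 n)
    (E1 : Mat m n)
    (A : Mat m r3) (hA : A = Rp A1 A1d * C3)
    (Ad : Mat r3 m) (hAd : IsMPInv A Ad)
    (B : Mat s3 n) (hB : B = D3 * Lp B1 B1d)
    (Bd : Mat n s3) (hBd : IsMPInv B Bd)
    (C : Mat m r4) (hC : C = Rp A1 A1d * C4)
    (Cd : Mat r4 m) (hCd : IsMPInv C Cd)
    (D : Mat s4 n) (hD : D = D4 * Lp B1 B1d)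
    (Dd : Mat n s4) (hDd : IsMPInv D Dd)
    (E : Mat m n) (hE : E = Rp A1 A1d * E1 * Lp B1 B1d)
    (M : Mat m r4) (hM : M = Rp A Ad * C)
    (Md : Mat r4 m) (hMd : IsMPInv M Md)
    (N : Mat s4 n) (hN : N = D * Lp B Bd)
    (Nd : Mat n s4) (hNd : IsMPInv N Nd)
    (S : Mat m r4) (hS : S = C * Lp M Md)
    (Sd : Mat r4 m) (hSd : IsMPInv S Sd)
    (hcond1 : Rp M Md * Rp A Ad * E = 0)
    (hcond2 : E * Lp B Bd * Lp N Nd = 0)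
    (hcond3 : Rp A Ad * E * Lp D Dd = 0)
    (hcond4 : Rp C Cd * E * Lp B Bd = 0)
    (X1 : Mat p1 n) (X2 : Mat m q1) (X3 : Mat r3 s3) (X4 : Mat r4 s4) :
    (A1 * X1 + X2 * B1 + C3 * X3 * D3 + C4 * X4 * D4 = E1) ↔
      (∃ (T1 : Mat r4 s4) (T2 : Mat r4 s4) (T3 : Mat r4 s4) (T4 : Mat r3 s3)
          (T5 : Mat r3 s3) (T6 : Mat p1 n) (T7 : Mat m q1) (T8 : Mat m q1),
        X3 = Ad * E * Bd - Ad * C * Md * E * Bd - Ad * S * Cd * E * Nd * D * Bd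
              - Ad * S * T2 * Rp N Nd * D * Bd + Lp A Ad * T4 + T5 * Rp B Bd ∧
        X4 = Md * E * Dd + Sd * S * Cd * E * Nd + Lp M Md * Lp S Sd * T1
              + Lp M Md * T2 * Rp N Nd + T3 * Rp D Dd ∧
        X1 = A1d * (E1 - C3 * X3 * D3 - C4 * X4 * D4) - A1d * T7 * B1
              + Lp A1 A1d * T6 ∧
        X2 = Rp A1 A1d * (E1 - C3 * X3 * D3 - C4 * X4 * D4) * B1d
              + A1 * A1d * T7 + T8 * Rp B1 B1d) := by
  have key : ∀ F : Mat m n, F = E1 - C3 * X3 * D3 - C4 * X4 * D4 →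
      Rp A1 A1d * F * Lp B1 B1d = E - (A * X3 * B + C * X4 * D) := by
    rintro F rfl
    rw [hE, hA, hB, hC, hD]
    simp only [Matrix.mul_sub, Matrix.sub_mul, Matrix.mul_assoc]; abel
  have h0 : (A1 * X1 + X2 * B1 + C3 * X3 * D3 + C4 * X4 * D4 = E1) ↔
      A1 * X1 + X2 * B1 = E1 - C3 * X3 * D3 - C4 * X4 * D4 := by
    rw [eq_sub_iff_add_eq, eq_sub_iff_add_eq, add_right_comm]
  rw [h0, sylv A1 A1d hA1 B1 B1d hB1, key _ rfl, sub_eq_zero, eq_comm (a := E),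
    core A Ad hAd B Bd hBd C Cd hCd D Dd hDd E M hM Md hMd N hN Nd hNd S hS Sd hSd
      hcond1 hcond2 hcond3 hcond4]
  constructor
  · rintro ⟨⟨T1, T2, T3, T4, T5, h3, h4⟩, T6, T7, T8, h1, h2⟩
    exact ⟨T1, T2, T3, T4, T5, T6, T7, T8, h3, h4, h1, h2⟩
  · rintro ⟨T1, T2, T3, T4, T5, T6, T7, T8, h3, h4, h1, h2⟩
    exact ⟨⟨T1, T2, T3, T4, T5, h3, h4⟩, T6, T7, T8, h1, h2⟩
end
end

section
/- Let A1 ∈ ℍ^{m×p1}, B1 ∈ ℍ^{q×n1}, C1 ∈ ℍ^{m×n1}, A2 ∈ ℍ^{m×p2}, B2 ∈ ℍ^{q×n2}, C2 ∈ ℍ^{m×n2}, A3 ∈ ℍ^{m3×p2}, B3 ∈ ℍ^{q4×n2}, C3 ∈ ℍ^{m3×n2} be quaternion matrices. Define A4 = A2 L_{A3}, B4 = R_{B1} B2, A = R_{A4} A2, B = B3 L_{B4}, C = R_{A4} A1, D = B2 L_{B4}, C4 = C2 − A2 A3⁺ C3 − R_{A1} C1 B1⁺ B2, E = R_{A4}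 C4 L_{B4}, M = R_A C, N = D L_B. Then there exist quaternion matrices X ∈ ℍ^{p1×n1}, Y ∈ ℍ^{m×q}, Z ∈ ℍ^{p2×n2}, W ∈ ℍ^{m3×q4} satisfying A1 X − Y B1 = C1, A2 Z − Y B2 = C2 and A3 Z − W B3 = C3 if and only if R_{A1} C1 L_{B1} = 0, R_{A2} C2 L_{B2} = 0, R_{A3} C3 L_{B3} = 0, R_M R_A E = 0, E L_B L_N = 0, R_A E L_D = 0, and R_C E L_B = 0. -/
open Matrix

noncomputable section

section helpers
variable {a b c d e f : ℕ}

theorem rp_mul {A : Mat a b} {Ad : Mat b a} (h : IsMPInv A Ad) : Rp A Ad * A = 0 := by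
  rw [Rp, Matrix.sub_mul, h.1, Matrix.one_mul, sub_self]

theorem mul_lp {A : Mat a b} {Ad : Mat b a} (h : IsMPInv A Ad) : A * Lp A Ad = 0 := by
  rw [Lp, Matrix.mul_sub, ← Matrix.mul_assoc, h.1, Matrix.mul_one, sub_self]

theorem rp_mul' {A : Mat a b} {Ad : Mat b a} (h : IsMPInv A Ad) (G : Mat b c) :
    Rp A Ad * (A * G) = 0 := by
  rw [← Matrix.mul_assoc, rp_mul h, Matrix.zero_mul]

theorem mul_lp' {A : Mat a b} {Ad : Mat b a} (h : IsMPInv A Ad) (G : Mat b c) :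
    A * (Lp A Ad * G) = 0 := by
  rw [← Matrix.mul_assoc, mul_lp h, Matrix.zero_mul]

theorem rp_fix {A : Mat a b} {Ad : Mat b a} {G : Mat a c} (h : Rp A Ad * G = 0) :
    A * (Ad * G) = G := by
  rw [Rp, Matrix.sub_mul, Matrix.one_mul, sub_eq_zero, Matrix.mul_assoc] at h
  exact h.symm

theorem lp_fix {A : Mat a b} {Ad : Mat b a} {G : Mat c b} (h : G * Lp A Ad = 0) :
    G * (Ad * A) = G := by
  rw [Lp, Matrix.mul_sub, Matrix.mul_one, sub_eq_zero] at h
  exact h.symm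

theorem sandwich {A : Mat a b} {Ad : Mat b a} {B : Mat c d} {Bd : Mat d c} {G : Mat a d}
    (h : Rp A Ad * G = 0) (h' : G * Lp B Bd = 0) : A * (Ad * G * Bd) * B = G := by
  calc A * (Ad * G * Bd) * B = (A * (Ad * G)) * (Bd * B) := by simp only [Matrix.mul_assoc]
    _ = G := by rw [rp_fix h, lp_fix h']

/-- Solvability of `A S - V B = G`. -/
theorem sylv_s14 {A : Mat a b} {Ad : Mat b a} {B : Mat c d} {Bd : Mat d c} {G : Mat a d}
    (h : Rp A Ad * G * Lp B Bd = 0) : ∃ (S : Mat b d) (V : Mat a c), A * S - V * B = G := by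
  refine ⟨Ad * G, -(Rp A Ad * G * Bd), ?_⟩
  have h2 : Rp A Ad * G * Bd * B = Rp A Ad * G := by
    rw [Matrix.mul_assoc _ Bd B]; exact lp_fix h
  rw [Matrix.neg_mul, h2, Rp, Matrix.sub_mul, Matrix.one_mul, ← Matrix.mul_assoc]
  abel

/-- Solvability of `A T B - C U D = E`. -/
theorem two_term {A : Mat a b} {Ad : Mat b a} (hA : IsMPInv A Ad)
    {B : Mat c d} {Bd : Mat d c} (hB : IsMPInv B Bd)
    {C : Mat a e} {Cd : Mat e a} (hC : IsMPInv C Cd)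
    {D : Mat f d} {Dd : Mat d f} (hD : IsMPInv D Dd)
    {M : Mat a e} (hM : M = Rp A Ad * C) {Md : Mat e a} (hMd : IsMPInv M Md)
    {N : Mat f d} (hN : N = D * Lp B Bd) {Nd : Mat d f} (hNd : IsMPInv N Nd)
    (E : Mat a d) :
    (∃ (T : Mat b c) (U : Mat e f), A * T * B - C * U * D = E) ↔
    (Rp M Md * Rp A Ad * E = 0 ∧ E * Lp B Bd * Lp N Nd = 0 ∧
        Rp A Ad * E * Lp D Dd = 0 ∧ Rp C Cd * E * Lp B Bd = 0) := by
  constructor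
  · rintro ⟨T, U, rfl⟩
    have h1 : Rp A Ad * (A * T * B - C * U * D) = - (M * (U * D)) := by
      rw [Matrix.mul_sub, hM]
      simp only [Matrix.mul_assoc, rp_mul' hA, zero_sub]
    have h2 : (A * T * B - C * U * D) * Lp B Bd = - (C * (U * N)) := by
      rw [Matrix.sub_mul, hN]
      simp only [Matrix.mul_assoc, mul_lp hB, Matrix.mul_zero, zero_sub]
    refine ⟨?_, ?_, ?_, ?_⟩
    · rw [Matrix.mul_assoc, h1, Matrix.mul_neg, rp_mul' hMd, neg_zero]
    · rw [h2, Matrix.neg_mul]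
      simp only [Matrix.mul_assoc, mul_lp hNd, Matrix.mul_zero, neg_zero]
    · rw [h1, Matrix.neg_mul]
      simp only [Matrix.mul_assoc, mul_lp hD, Matrix.mul_zero, neg_zero]
    · rw [Matrix.mul_assoc, h2, Matrix.mul_neg, rp_mul' hC, neg_zero]
  · rintro ⟨h1, h2, h3, h4⟩
    rw [Matrix.mul_assoc] at h1 h4
    obtain ⟨U1, hU1⟩ : ∃ U1 : Mat e f, M * U1 * D = Rp A Ad * E := ⟨_, sandwich h1 h3⟩
    obtain ⟨F, hF⟩ : ∃ F, F = E * Lp B Bd - C * U1 * N := ⟨_, rfl⟩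
    have hF1 : Rp C Cd * F = 0 := by
      rw [hF, Matrix.mul_sub, h4, Matrix.mul_assoc C, rp_mul' hC, sub_zero]
    have hF2 : F * Lp N Nd = 0 := by
      rw [hF, Matrix.sub_mul, h2, Matrix.mul_assoc _ N, mul_lp hNd, Matrix.mul_zero, sub_zero]
    obtain ⟨G, hG⟩ : ∃ G : Mat e f, C * G * N = F := ⟨_, sandwich hF1 hF2⟩
    have hF3 : Rp A Ad * F = 0 := by
      have : Rp A Ad * (C * U1 * N) = M * U1 * D * Lp B Bd := by
        rw [hM, hN]; simp only [Matrix.mul_assoc]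
      rw [hF, Matrix.mul_sub, this, hU1, Matrix.mul_assoc, sub_self]
    have hMG : M * (G * N) = 0 := by
      rw [← hF3, ← hG, hM]; simp only [Matrix.mul_assoc]
    obtain ⟨U, hU⟩ : ∃ U, U = U1 + Lp M Md * G := ⟨_, rfl⟩
    have e1 : M * U * D = Rp A Ad * E := by
      rw [hU, Matrix.mul_add, mul_lp' hMd, add_zero, hU1]
    have e2 : C * U * N = E * Lp B Bd := by
      have : Lp M Md * G * N = G * N := by
        rw [Lp, Matrix.mul_assoc, Matrix.sub_mul, Matrix.one_mul, Matrix.mul_assoc, hMG,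
          Matrix.mul_zero, sub_zero]
      rw [hU, Matrix.mul_add, Matrix.add_mul, Matrix.mul_assoc C (Lp M Md * G), this,
        ← Matrix.mul_assoc, hG, hF]
      abel
    have k1' : Rp A Ad * (E + C * (-U) * D) = 0 := by
      have : Rp A Ad * (E + C * (-U) * D) = Rp A Ad * E - M * U * D := by
        rw [Matrix.mul_add, hM]
        simp only [Matrix.mul_assoc, Matrix.mul_neg, Matrix.neg_mul, sub_eq_add_neg]
      rw [this, e1, sub_self]
    have k2' : (E + C * (-U) * D) * Lp B Bd = 0 := by
      have : (E + C * (-U) * D) * Lp B Bd = E * Lp B Bd - C * U * N := by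
        rw [Matrix.add_mul, hN]
        simp only [Matrix.mul_assoc, Matrix.mul_neg, Matrix.neg_mul, sub_eq_add_neg]
      rw [this, e2, sub_self]
    exact ⟨_, -U, by rw [sandwich k1' k2']; abel⟩

end helpers

theorem stmt_14 {m q p1 n1 p2 n2 m3 q4 : ℕ}
    (A1 : Mat m p1) (A1d : Mat p1 m) (hA1 : IsMPInv A1 A1d)
    (B1 : Mat q n1) (B1d : Mat n1 q) (hB1 : IsMPInv B1 B1d)
    (C1 : Mat m n1)
    (A2 : Mat m p2) (A2d : Mat p2 m) (hA2 : IsMPInv A2 A2d)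
    (B2 : Mat q n2) (B2d : Mat n2 q) (hB2 : IsMPInv B2 B2d)
    (C2 : Mat m n2)
    (A3 : Mat m3 p2) (A3d : Mat p2 m3) (hA3 : IsMPInv A3 A3d)
    (B3 : Mat q4 n2) (B3d : Mat n2 q4) (hB3 : IsMPInv B3 B3d)
    (C3 : Mat m3 n2)
    (A4 : Mat m p2) (hA4 : A4 = A2 * Lp A3 A3d)
    (A4d : Mat p2 m) (hA4d : IsMPInv A4 A4d)
    (B4 : Mat q n2) (hB4 : B4 = Rp B1 B1d * B2)
    (B4d : Mat n2 q) (hB4d : IsMPInv B4 B4d)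
    (A : Mat m p2) (hA : A = Rp A4 A4d * A2)
    (Ad : Mat p2 m) (hAd : IsMPInv A Ad)
    (B : Mat q4 n2) (hB : B = B3 * Lp B4 B4d)
    (Bd : Mat n2 q4) (hBd : IsMPInv B Bd)
    (C : Mat m p1) (hC : C = Rp A4 A4d * A1)
    (Cd : Mat p1 m) (hCd : IsMPInv C Cd)
    (D : Mat q n2) (hD : D = B2 * Lp B4 B4d)
    (Dd : Mat n2 q) (hDd : IsMPInv D Dd)
    (C4 : Mat m n2)
    (hC4 : C4 = C2 - A2 * A3d * C3 - Rp A1 A1d * C1 * B1d * B2)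
    (E : Mat m n2) (hE : E = Rp A4 A4d * C4 * Lp B4 B4d)
    (MM : Mat m p1) (hMM : MM = Rp A Ad * C)
    (MMd : Mat p1 m) (hMMd : IsMPInv MM MMd)
    (NN : Mat q n2) (hNN : NN = D * Lp B Bd)
    (NNd : Mat n2 q) (hNNd : IsMPInv NN NNd) :
    (∃ (X : Mat p1 n1) (Y : Mat m q) (Z : Mat p2 n2) (W : Mat m3 q4),
        A1 * X - Y * B1 = C1 ∧ A2 * Z - Y * B2 = C2 ∧ A3 * Z - W * B3 = C3) ↔
      (Rp A1 A1d * C1 * Lp B1 B1d = 0 ∧ Rp A2 A2d * C2 * Lp B2 B2d = 0 ∧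
        Rp A3 A3d * C3 * Lp B3 B3d = 0 ∧
        Rp MM MMd * Rp A Ad * E = 0 ∧ E * Lp B Bd * Lp NN NNd = 0 ∧
        Rp A Ad * E * Lp D Dd = 0 ∧ Rp C Cd * E * Lp B Bd = 0) := by
  have key := two_term hAd hBd hCd hDd hMM hMMd hNN hNNd E
  rw [← key]
  constructor
  · rintro ⟨X, Y, Z, W, h1, h2, h3⟩
    refine ⟨?_, ?_, ?_, A3d * W, A1d * Y, ?_⟩
    · rw [← h1, Matrix.mul_sub, Matrix.sub_mul, rp_mul' hA1]
      simp only [Matrix.mul_assoc, mul_lp hB1, Matrix.mul_zero, Matrix.zero_mul, sub_zero]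
    · rw [← h2, Matrix.mul_sub, Matrix.sub_mul, rp_mul' hA2]
      simp only [Matrix.mul_assoc, mul_lp hB2, Matrix.mul_zero, Matrix.zero_mul, sub_zero]
    · rw [← h3, Matrix.mul_sub, Matrix.sub_mul, rp_mul' hA3]
      simp only [Matrix.mul_assoc, mul_lp hB3, Matrix.mul_zero, Matrix.zero_mul, sub_zero]
    · have hb : B1 * (B1d * B2) = B2 - B4 := by
        rw [hB4, Rp, Matrix.sub_mul, Matrix.one_mul, Matrix.mul_assoc]; abel
      have hz : A2 * (A3d * (A3 * Z)) = A2 * Z - A4 * Z := by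
        rw [hA4, Lp, Matrix.mul_sub, Matrix.sub_mul, Matrix.mul_one]
        simp only [Matrix.mul_assoc]; abel
      have hr : Rp A1 A1d * C1 * B1d * B2 = - (Rp A1 A1d * (Y * (B2 - B4))) := by
        rw [← hb, ← h1, Matrix.mul_sub, rp_mul' hA1, zero_sub]
        simp only [Matrix.neg_mul, Matrix.mul_assoc]
      have hc : C4 = A4 * Z + A2 * (A3d * W) * B3 - A1 * (A1d * Y) * B2
          - Rp A1 A1d * Y * B4 := by
        rw [hC4, hr, ← h2, ← h3, Matrix.mul_sub, Matrix.mul_assoc A2, Matrix.mul_assoc A2, hz]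
        rw [Rp]
        simp only [Matrix.mul_sub, Matrix.sub_mul, Matrix.one_mul, Matrix.mul_assoc]
        abel
      rw [hE, hc, hA, hB, hC, hD]
      simp only [Matrix.mul_sub, Matrix.sub_mul, Matrix.mul_add, Matrix.add_mul,
        Matrix.mul_assoc, rp_mul' hA4d, mul_lp hB4d, Matrix.mul_zero, sub_zero, zero_add]
  · rintro ⟨h1, -, h3, T, U, hTU⟩
    obtain ⟨S, V, hSV⟩ : ∃ (S : Mat p2 n2) (V : Mat m q), A4 * S - V * B4 = C4 - A2 * T * B3 + A1 * U * B2 := by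
      apply sylv_s14 (Ad := A4d) (Bd := B4d)
      have : Rp A4 A4d * (C4 - A2 * T * B3 + A1 * U * B2) * Lp B4 B4d
          = E - (A * T * B - C * U * D) := by
        rw [hE, hA, hB, hC, hD]
        simp only [Matrix.mul_sub, Matrix.sub_mul, Matrix.mul_add, Matrix.add_mul,
          Matrix.mul_assoc]
        abel
      rw [this, hTU, sub_self]
    have hR1 : Rp A1 A1d * C1 * B1d * B1 = Rp A1 A1d * C1 := by
      rw [Matrix.mul_assoc _ B1d]; exact lp_fix h1
    have hR3 : Rp A3 A3d * C3 * B3d * B3 = Rp A3 A3d * C3 := by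
      rw [Matrix.mul_assoc _ B3d]; exact lp_fix h3
    refine ⟨A1d * C1 + U * B1, A1 * U - Rp A1 A1d * C1 * B1d + V * Rp B1 B1d,
      A3d * C3 + T * B3 + Lp A3 A3d * S, A3 * T - Rp A3 A3d * C3 * B3d, ?_, ?_, ?_⟩
    · rw [Matrix.add_mul, Matrix.sub_mul, hR1, Matrix.mul_assoc V, rp_mul hB1, Rp,
        Matrix.sub_mul, Matrix.mul_add, Matrix.one_mul, Matrix.mul_zero]
      simp only [Matrix.mul_assoc]
      abel
    · have hs : A2 * (Lp A3 A3d * S) = A4 * S := by rw [hA4, Matrix.mul_assoc]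
      have hv : V * Rp B1 B1d * B2 = V * B4 := by rw [hB4, Matrix.mul_assoc]
      have hS : A4 * S = C4 - A2 * T * B3 + A1 * U * B2 + V * B4 := by
        rw [← hSV]; abel
      rw [Matrix.mul_add, Matrix.mul_add, hs, Matrix.add_mul, Matrix.sub_mul, hv, hS, hC4]
      simp only [Matrix.mul_assoc]
      abel
    · rw [Matrix.sub_mul, hR3, Matrix.mul_add, mul_lp' hA3, Rp,
        Matrix.sub_mul, Matrix.mul_add, Matrix.one_mul]
      simp only [Matrix.mul_assoc]
      abel
end
end

section
/- Let A1 ∈ ℍ^{m1×p}, B1 ∈ ℍ^{q1×n1}, C1 ∈ ℍ^{m1×n1}, A2 ∈ ℍ^{m2×m1}, B2 ∈ ℍ^{q2×q1}, C2 ∈ ℍ^{m2×q1}, A3 ∈ ℍ^{m3×m2}, B3 ∈ ℍ^{q4×q2}, C3 ∈ ℍ^{m3×q2} be quaternion matrices. Define A = R_{(A2 A1)} A2, B = R_{B1} L_{(B3 B2)}, C = R_{(A2 A1)} L_{A3}, D = B2 L_{(B3 B2)}, C4 = C2 + A3⁺ C3 B2 + A2 R_{A1} C1 B1⁺, E = R_{(A2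 A1)} C4 L_{(B3 B2)}, M = R_A C, N = D L_B. Then there exist quaternion matrices X ∈ ℍ^{p×n1}, Y ∈ ℍ^{m1×q1}, Z ∈ ℍ^{m2×q2}, W ∈ ℍ^{m3×q4} satisfying A1 X − Y B1 = C1, A2 Y − Z B2 = C2 and A3 Z − W B3 = C3 if and only if R_{A1} C1 L_{B1} = 0, R_{A2} C2 L_{B2} = 0, R_{A3} C3 L_{B3} = 0, R_M R_A E = 0, E L_B L_N = 0, R_A E L_D = 0, and R_C E L_B = 0. -/
open Matrix

noncomputable section

section helpers
variable {k l m n r s : ℕ}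

lemma aux_RA {A : Mat k l} {Ad : Mat l k} (h : IsMPInv A Ad) : Rp A Ad * A = 0 := by
  rw [Rp, Matrix.sub_mul, Matrix.one_mul, h.1, sub_self]

lemma aux_AL {A : Mat k l} {Ad : Mat l k} (h : IsMPInv A Ad) : A * Lp A Ad = 0 := by
  rw [Lp, Matrix.mul_sub, Matrix.mul_one, ← Matrix.mul_assoc, h.1, sub_self]

lemma aux_R0 {A : Mat k l} {Ad : Mat l k} {E : Mat k m} (h : Rp A Ad * E = 0) :
    A * (Ad * E) = E := by
  rw [Rp, Matrix.sub_mul, Matrix.one_mul, sub_eq_zero, Matrix.mul_assoc] at h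
  exact h.symm

lemma aux_L0 {A : Mat k l} {Ad : Mat l k} {E : Mat m l} (h : E * Lp A Ad = 0) :
    E * Ad * A = E := by
  rw [Lp, Matrix.mul_sub, Matrix.mul_one, sub_eq_zero, ← Matrix.mul_assoc] at h
  exact h.symm

/-- If `R_A G L_B = 0` then `G = A U + T B` is solvable. -/
lemma aux_syl {A : Mat k l} {Ad : Mat l k} {B : Mat m n} {Bd : Mat n m} {G : Mat k n}
    (h : Rp A Ad * G * Lp B Bd = 0) : ∃ (U : Mat l n) (T : Mat k m), G = A * U + T * B := by
  refine ⟨Ad * G, Rp A Ad * G * Bd, ?_⟩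
  rw [aux_L0 h, Rp, Matrix.sub_mul, Matrix.one_mul, Matrix.mul_assoc]
  abel

/-- Solvability of `A V B + C S D = E`. -/
lemma aux_two {A : Mat k l} {Ad : Mat l k} {B : Mat m n} {Bd : Mat n m}
    {C : Mat k r} {Cd : Mat r k} {D : Mat s n} {Dd : Mat n s} {E : Mat k n}
    {M : Mat k r} {Md : Mat r k} {N : Mat s n} {Nd : Mat n s}
    (hM : M = Rp A Ad * C) (hN : N = D * Lp B Bd)
    (hNd : IsMPInv N Nd)
    (h1 : Rp M Md * Rp A Ad * E = 0) (h2 : E * Lp B Bd * Lp N Nd = 0)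
    (h3 : Rp A Ad * E * Lp D Dd = 0) (h4 : Rp C Cd * E * Lp B Bd = 0) :
    ∃ (V : Mat l m) (S : Mat r s), A * V * B + C * S * D = E := by
  rw [Matrix.mul_assoc] at h1 h4
  have e1 := aux_R0 h1
  have e2 := aux_L0 h2
  have e3 := aux_L0 h3
  have e4 := aux_R0 h4
  obtain ⟨Y1, hY1⟩ : ∃ Y1 : Mat r s, M * Y1 * D = Rp A Ad * E := by
    refine ⟨Md * (Rp A Ad * E) * Dd, ?_⟩
    rw [← Matrix.mul_assoc M, e1, e3]
  obtain ⟨Y2, hY2⟩ : ∃ Y2 : Mat r s, C * Y2 * N = E * Lp B Bd := by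
    refine ⟨Cd * (E * Lp B Bd) * Nd, ?_⟩
    rw [← Matrix.mul_assoc C, e4, e2]
  have k1 : M * Y1 * N = Rp A Ad * E * Lp B Bd := by
    rw [hN, ← Matrix.mul_assoc, hY1]
  have k2 : M * Y2 * N = Rp A Ad * E * Lp B Bd := by
    rw [hM, Matrix.mul_assoc _ E, ← hY2]
    simp only [Matrix.mul_assoc]
  have k3 : M * (Y2 - Y1) * N = 0 := by
    rw [Matrix.mul_sub, Matrix.sub_mul, k1, k2, sub_self]
  obtain ⟨S, hS1, hS2⟩ : ∃ S : Mat r s, M * S * D = Rp A Ad * E ∧ C * S * N = E * Lp B Bd := by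
    refine ⟨Y1 + (Y2 - Y1) * N * Nd, ?_, ?_⟩
    · have : M * ((Y2 - Y1) * N * Nd) = 0 := by
        rw [← Matrix.mul_assoc, ← Matrix.mul_assoc, k3, Matrix.zero_mul]
      rw [Matrix.mul_add, this, add_zero, hY1]
    · have : (Y2 - Y1) * N * Nd * N = (Y2 - Y1) * N := by
        rw [Matrix.mul_assoc (Y2 - Y1), Matrix.mul_assoc (Y2 - Y1), hNd.1]
      rw [Matrix.mul_assoc, Matrix.add_mul, this, ← Matrix.add_mul, add_sub_cancel,
        ← Matrix.mul_assoc, hY2]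
  have f1 : Rp A Ad * (E - C * S * D) = 0 := by
    rw [Matrix.mul_sub, ← hS1, hM]
    simp only [Matrix.mul_assoc, sub_self]
  have f2 : (E - C * S * D) * Lp B Bd = 0 := by
    rw [Matrix.sub_mul, ← hS2, hN]
    simp only [Matrix.mul_assoc, sub_self]
  refine ⟨Ad * (E - C * S * D) * Bd, S, ?_⟩
  rw [← Matrix.mul_assoc A, aux_R0 f1, aux_L0 f2, sub_add_cancel]

end helpers

theorem stmt_15 {m1 p q1 n1 m2 q2 m3 q4 : ℕ}
    (A1 : Mat m1 p) (A1d : Mat p m1) (hA1 : IsMPInv A1 A1d)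
    (B1 : Mat q1 n1) (B1d : Mat n1 q1) (hB1 : IsMPInv B1 B1d)
    (C1 : Mat m1 n1)
    (A2 : Mat m2 m1) (A2d : Mat m1 m2) (hA2 : IsMPInv A2 A2d)
    (B2 : Mat q2 q1) (B2d : Mat q1 q2) (hB2 : IsMPInv B2 B2d)
    (C2 : Mat m2 q1)
    (A3 : Mat m3 m2) (A3d : Mat m2 m3) (hA3 : IsMPInv A3 A3d)
    (B3 : Mat q4 q2) (B3d : Mat q2 q4) (hB3 : IsMPInv B3 B3d)
    (C3 : Mat m3 q2)
    (A21 : Mat m2 p) (hA21 : A21 = A2 * A1)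
    (A21d : Mat p m2) (hA21d : IsMPInv A21 A21d)
    (B32 : Mat q4 q1) (hB32 : B32 = B3 * B2)
    (B32d : Mat q1 q4) (hB32d : IsMPInv B32 B32d)
    (A : Mat m2 m1) (hA : A = Rp A21 A21d * A2)
    (Ad : Mat m1 m2) (hAd : IsMPInv A Ad)
    (B : Mat q1 q1) (hB : B = Rp B1 B1d * Lp B32 B32d)
    (Bd : Mat q1 q1) (hBd : IsMPInv B Bd)
    (C : Mat m2 m2) (hC : C = Rp A21 A21d * Lp A3 A3d)
    (Cd : Mat m2 m2) (hCd : IsMPInv C Cd)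
    (D : Mat q2 q1) (hD : D = B2 * Lp B32 B32d)
    (Dd : Mat q1 q2) (hDd : IsMPInv D Dd)
    (C4 : Mat m2 q1)
    (hC4 : C4 = C2 + A3d * C3 * B2 + A2 * Rp A1 A1d * C1 * B1d)
    (E : Mat m2 q1) (hE : E = Rp A21 A21d * C4 * Lp B32 B32d)
    (MM : Mat m2 m2) (hMM : MM = Rp A Ad * C)
    (MMd : Mat m2 m2) (hMMd : IsMPInv MM MMd)
    (NN : Mat q2 q1) (hNN : NN = D * Lp B Bd)
    (NNd : Mat q1 q2) (hNNd : IsMPInv NN NNd) :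
    (∃ (X : Mat p n1) (Y : Mat m1 q1) (Z : Mat m2 q2) (W : Mat m3 q4),
        A1 * X - Y * B1 = C1 ∧ A2 * Y - Z * B2 = C2 ∧ A3 * Z - W * B3 = C3) ↔
      (Rp A1 A1d * C1 * Lp B1 B1d = 0 ∧ Rp A2 A2d * C2 * Lp B2 B2d = 0 ∧
        Rp A3 A3d * C3 * Lp B3 B3d = 0 ∧
        Rp MM MMd * Rp A Ad * E = 0 ∧ E * Lp B Bd * Lp NN NNd = 0 ∧
        Rp A Ad * E * Lp D Dd = 0 ∧ Rp C Cd * E * Lp B Bd = 0) := by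
  have RA21 := aux_RA hA21d
  have LB32 := aux_AL hB32d
  constructor
  · rintro ⟨X, Y, Z, W, h1, h2, h3⟩
    have key : C4 = A2 * Y * Rp B1 B1d - Lp A3 A3d * Z * B2 + A21 * (A1d * Y * B1 * B1d)
        - A3d * W * B32 := by
      have e1 : Rp A1 A1d * C1 = - (Rp A1 A1d * Y * B1) := by
        rw [← h1, Matrix.mul_sub, ← Matrix.mul_assoc, aux_RA hA1, Matrix.zero_mul, zero_sub,
          Matrix.mul_assoc]
      rw [hC4, Matrix.mul_assoc A2, e1, ← h2, ← h3, hA21, hB32]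
      simp only [Rp, Lp, Matrix.mul_sub, Matrix.sub_mul, Matrix.mul_one, Matrix.one_mul,
        Matrix.mul_assoc, Matrix.mul_neg, Matrix.neg_mul]
      abel
    have hE' : E = A * Y * B - C * Z * D := by
      have t1 : ∀ P : Mat p q1, Rp A21 A21d * (A21 * P) = 0 := fun P => by
        rw [← Matrix.mul_assoc, RA21, Matrix.zero_mul]
      rw [hE, key, hA, hB, hC, hD]
      simp only [Matrix.mul_sub, Matrix.mul_add, Matrix.sub_mul, Matrix.add_mul, t1,
        Matrix.mul_assoc, LB32, Matrix.mul_zero, Matrix.zero_mul, sub_zero, add_zero]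
    have g1 : Rp A Ad * E = - (MM * Z * D) := by
      rw [hE', Matrix.mul_sub, Matrix.mul_assoc A, ← Matrix.mul_assoc _ A, aux_RA hAd,
        Matrix.zero_mul, zero_sub, hMM]
      simp only [Matrix.mul_assoc]
    have g2 : E * Lp B Bd = - (C * Z * NN) := by
      rw [hE', Matrix.sub_mul, Matrix.mul_assoc _ B, aux_AL hBd,
        Matrix.mul_zero, zero_sub, hNN]
      simp only [Matrix.mul_assoc]
    refine ⟨?_, ?_, ?_, ?_, ?_, ?_, ?_⟩
    · rw [← h1, Matrix.mul_sub, ← Matrix.mul_assoc, aux_RA hA1, Matrix.zero_mul, zero_sub,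
        Matrix.neg_mul, Matrix.mul_assoc, Matrix.mul_assoc, aux_AL hB1]
      simp
    · rw [← h2, Matrix.mul_sub, ← Matrix.mul_assoc, aux_RA hA2, Matrix.zero_mul, zero_sub,
        Matrix.neg_mul, Matrix.mul_assoc, Matrix.mul_assoc, aux_AL hB2]
      simp
    · rw [← h3, Matrix.mul_sub, ← Matrix.mul_assoc, aux_RA hA3, Matrix.zero_mul, zero_sub,
        Matrix.neg_mul, Matrix.mul_assoc, Matrix.mul_assoc, aux_AL hB3]
      simp
    · rw [Matrix.mul_assoc, g1, Matrix.mul_neg, Matrix.mul_assoc MM, ← Matrix.mul_assoc _ MM,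
        aux_RA hMMd, Matrix.zero_mul, neg_zero]
    · rw [g2, Matrix.neg_mul, Matrix.mul_assoc _ NN, aux_AL hNNd, Matrix.mul_zero, neg_zero]
    · rw [g1, Matrix.neg_mul, Matrix.mul_assoc _ D, aux_AL hDd, Matrix.mul_zero, neg_zero]
    · rw [Matrix.mul_assoc, g2, Matrix.mul_neg, Matrix.mul_assoc C, ← Matrix.mul_assoc _ C,
        aux_RA hCd, Matrix.zero_mul, neg_zero]
  · rintro ⟨c1, -, c3, h1, h2, h3, h4⟩
    obtain ⟨V, S, hVS⟩ := aux_two hMM hNN hNNd h1 h2 h3 h4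
    have hG : Rp A21 A21d * (C4 - A2 * V * Rp B1 B1d - Lp A3 A3d * S * B2) * Lp B32 B32d = 0 := by
      have : E - (A * V * B + C * S * D) = 0 := by rw [hVS, sub_self]
      rw [← this, hE, hA, hB, hC, hD]
      simp only [Matrix.mul_sub, Matrix.sub_mul, Matrix.mul_assoc]
      abel
    obtain ⟨U, T, hUT⟩ := aux_syl hG
    have hC4' : C4 = A21 * U + T * B32 + A2 * V * Rp B1 B1d + Lp A3 A3d * S * B2 := by
      rw [← hUT]; abel
    have c1' := aux_L0 c1
    have c3' := aux_L0 c3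
    have A3L : A3 * (Lp A3 A3d * S) = 0 := by
      rw [← Matrix.mul_assoc, aux_AL hA3, Matrix.zero_mul]
    have RB1 : V * Rp B1 B1d * B1 = 0 := by
      rw [Matrix.mul_assoc, aux_RA hB1, Matrix.mul_zero]
    refine ⟨A1d * C1 + U * B1, -(Rp A1 A1d * C1 * B1d) + A1 * U + V * Rp B1 B1d,
      A3d * C3 - Lp A3 A3d * S - T * B3, -(Rp A3 A3d * C3 * B3d) - A3 * T, ?_, ?_, ?_⟩
    · rw [Matrix.add_mul, Matrix.add_mul, RB1, Matrix.neg_mul, c1']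
      simp only [Rp, Matrix.mul_add, Matrix.sub_mul, Matrix.one_mul, Matrix.mul_assoc]
      abel
    · have : C2 = A21 * U + T * B32 + A2 * V * Rp B1 B1d + Lp A3 A3d * S * B2
          - A3d * C3 * B2 - A2 * Rp A1 A1d * C1 * B1d := by
        rw [← hC4', hC4]; abel
      rw [this, hA21, hB32]
      simp only [Matrix.mul_add, Matrix.mul_neg, Matrix.sub_mul, Matrix.mul_assoc]
      abel
    · rw [Matrix.sub_mul, Matrix.neg_mul, c3', Matrix.mul_sub, Matrix.mul_sub, A3L]
      simp only [Rp, Matrix.sub_mul, Matrix.one_mul, Matrix.mul_assoc]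
      abel
end
end
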